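/- arXiv:2601.19147 — 4 statements merged into one kernel-verified Lean document; each statement's English description precedes it below -/
import Mathlib

section
/- Let W be a rectilinear polygonal environment with free space F, fix points s_A,s_B,t_A,t_B ∈ F, let R be a corridor, and let γ(R), R↔⁺, R↔⁻ be as in the context. If p,q ∈ γ(R) both lie in R↔⁺, or both lie in R↔⁻, then every shortest path in F from p to q is x-monotone. -/
open Set
open scoped ENNReal

noncomputable section

/-- The ℓ∞ norm of a point of `ℝ²`. -/
def linf (p : ℝ × ℝ) : ℝ := max |p.1| |p.2|

/-- The ℓ₁ norm of a point of `ℝ²`. -/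
def l1 (p : ℝ × ℝ) : ℝ := |p.1| + |p.2|

/-- The Euclidean distance between two points of `ℝ²`. -/
def euclDist (p q : ℝ × ℝ) : ℝ := Real.sqrt ((p.1 - q.1) ^ 2 + (p.2 - q.2) ^ 2)

/-- A closed axis-aligned rectangle with nonempty interior. -/
def IsClosedAxisRect (S : Set (ℝ × ℝ)) : Prop :=
  ∃ a b c d : ℝ, a < b ∧ c < d ∧ S = Icc a b ×ˢ Icc c d

/-- A rectilinear polygonal environment: a nonempty compact subset of the plane that is a
finite union of closed axis-aligned rectangles with nonempty interior, and that equals the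
closure of its interior. -/
def IsRectilinearEnv (W : Set (ℝ × ℝ)) : Prop :=
  W.Nonempty ∧ IsCompact W ∧
    (∃ 𝓡 : Finset (Set (ℝ × ℝ)), (∀ S ∈ 𝓡, IsClosedAxisRect S) ∧ W = ⋃ S ∈ 𝓡, S) ∧
    W = closure (interior W)

/-- The free space of a workspace `W`: placements of the center of a closed axis-aligned
unit square keeping the square inside `W`. -/
def freeSpace (W : Set (ℝ × ℝ)) : Set (ℝ × ℝ) :=
  {p | ∀ q : ℝ × ℝ, linf q ≤ 1 / 2 → p + q ∈ W}

/-- A free configuration of the two robots. -/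
def FreeConf (F : Set (ℝ × ℝ)) (c : (ℝ × ℝ) × (ℝ × ℝ)) : Prop :=
  c.1 ∈ F ∧ c.2 ∈ F ∧ 1 ≤ linf (c.1 - c.2)

/-- The ℓ₁-length (total variation w.r.t. the metric induced by the ℓ₁-norm) of a planar
path on a set of times. -/
def l1VarOn (γ : ℝ → ℝ × ℝ) (s : Set ℝ) : ℝ≥0∞ :=
  eVariationOn (fun t => (WithLp.equiv 1 (ℝ × ℝ)).symm (γ t)) s

/-- An `(s,t)`-plan: a continuous map on `[0,1]` from `s` to `t`. -/
def IsPlan (s t : (ℝ × ℝ) × (ℝ × ℝ)) (pln : ℝ → (ℝ × ℝ) × (ℝ × ℝ)) : Prop :=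
  ContinuousOn pln (Icc 0 1) ∧ pln 0 = s ∧ pln 1 = t

/-- A plan is feasible if every configuration along it is free. -/
def Feasible (F : Set (ℝ × ℝ)) (pln : ℝ → (ℝ × ℝ) × (ℝ × ℝ)) : Prop :=
  ∀ lam ∈ Icc (0 : ℝ) 1, FreeConf F (pln lam)

/-- The cost of a plan: the sum of the ℓ₁-lengths of the two robot paths. -/
def planCost (pln : ℝ → (ℝ × ℝ) × (ℝ × ℝ)) : ℝ≥0∞ :=
  l1VarOn (fun t => (pln t).1) (Icc 0 1) + l1VarOn (fun t => (pln t).2) (Icc 0 1)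

/-- An optimal `(s,t)`-plan: feasible, and of cost at most that of every feasible plan. -/
def IsOptimalPlan (F : Set (ℝ × ℝ)) (s t : (ℝ × ℝ) × (ℝ × ℝ))
    (pln : ℝ → (ℝ × ℝ) × (ℝ × ℝ)) : Prop :=
  IsPlan s t pln ∧ Feasible F pln ∧
    ∀ pln', IsPlan s t pln' → Feasible F pln' → planCost pln ≤ planCost pln'

/-- A decoupled plan: `[0,1]` splits into finitely many subintervals on each of which
one of the two robots is parked. -/
def IsDecoupled (pln : ℝ → (ℝ × ℝ) × (ℝ × ℝ)) : Prop :=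
  ∃ (n : ℕ) (τ : ℕ → ℝ), τ 0 = 0 ∧ τ n = 1 ∧ (∀ i, i < n → τ i ≤ τ (i + 1)) ∧
    ∀ i, i < n →
      (∀ a ∈ Icc (τ i) (τ (i + 1)), (pln a).1 = (pln (τ i)).1) ∨
      (∀ a ∈ Icc (τ i) (τ (i + 1)), (pln a).2 = (pln (τ i)).2)

/-- A rectilinear path: piecewise linear, with every linear piece horizontal or vertical. -/
def IsRectilinearPath (γ : ℝ → ℝ × ℝ) : Prop :=
  ∃ (n : ℕ) (τ : ℕ → ℝ), τ 0 = 0 ∧ τ n = 1 ∧ (∀ i, i < n → τ i ≤ τ (i + 1)) ∧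
    ∀ i, i < n → ∃ v : ℝ × ℝ, (v.1 = 0 ∨ v.2 = 0) ∧
      ∀ a ∈ Icc (τ i) (τ (i + 1)), γ a = γ (τ i) + (a - τ i) • v

/-- A rectilinear plan: both robot paths are rectilinear. -/
def IsRectilinearPlan (pln : ℝ → (ℝ × ℝ) × (ℝ × ℝ)) : Prop :=
  IsRectilinearPath (fun t => (pln t).1) ∧ IsRectilinearPath (fun t => (pln t).2)

/-- An alternating path: horizontal and vertical pieces (possibly of zero length)
alternate. -/
def IsAlternatingPath (γ : ℝ → ℝ × ℝ) : Prop :=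
  ∃ (n : ℕ) (τ : ℕ → ℝ) (d : ℕ → Bool), τ 0 = 0 ∧ τ n = 1 ∧
    (∀ i, i < n → τ i ≤ τ (i + 1)) ∧
    (∀ i, i + 1 < n → d (i + 1) = !d i) ∧
    ∀ i, i < n → ∃ v : ℝ × ℝ,
      (if d i = true then v.2 = 0 else v.1 = 0) ∧
      ∀ a ∈ Icc (τ i) (τ (i + 1)), γ a = γ (τ i) + (a - τ i) • v

/-- An alternating plan. -/
def IsAlternatingPlan (pln : ℝ → (ℝ × ℝ) × (ℝ × ℝ)) : Prop :=
  IsAlternatingPath (fun t => (pln t).1) ∧ IsAlternatingPath (fun t => (pln t).2)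

/-- `y` is the height of a horizontal edge of `∂F`. -/
def IsHorizEdgeY (F : Set (ℝ × ℝ)) (y : ℝ) : Prop :=
  ∃ a b : ℝ, a < b ∧ (Icc a b ×ˢ ({y} : Set ℝ)) ⊆ frontier F

/-- `x` is the abscissa of a vertical edge of `∂F`. -/
def IsVertEdgeX (F : Set (ℝ × ℝ)) (x : ℝ) : Prop :=
  ∃ a b : ℝ, a < b ∧ (({x} : Set ℝ) ×ˢ Icc a b) ⊆ frontier F

/-- `y` is the height of a horizontal `i`-line for some `i ≤ k` (w.r.t. the free space `F`
and the set `P` of the four source/target points). -/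
def IsHorizLineY (F : Set (ℝ × ℝ)) (P : Set (ℝ × ℝ)) (k : ℕ) (y : ℝ) : Prop :=
  ∃ i : ℕ, i ≤ k ∧
    ((∃ y₀ : ℝ, IsHorizEdgeY F y₀ ∧ |y - y₀| = (i : ℝ)) ∨ ∃ p ∈ P, |y - p.2| = (i : ℝ))

/-- `x` is the abscissa of a vertical `i`-line for some `i ≤ k`. -/
def IsVertLineX (F : Set (ℝ × ℝ)) (P : Set (ℝ × ℝ)) (k : ℕ) (x : ℝ) : Prop :=
  ∃ i : ℕ, i ≤ k ∧
    ((∃ x₀ : ℝ, IsVertEdgeX F x₀ ∧ |x - x₀| = (i : ℝ)) ∨ ∃ p ∈ P, |x - p.1| = (i : ℝ))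

/-- A grid point: a point of `F` lying on a horizontal grid line and a vertical grid line. -/
def IsGridPoint (F : Set (ℝ × ℝ)) (P : Set (ℝ × ℝ)) (u : ℝ × ℝ) : Prop :=
  u ∈ F ∧ IsHorizLineY F P 2 u.2 ∧ IsVertLineX F P 2 u.1

/-- A grid edge: a closed segment in `F` joining two grid points on a common grid line, with
no grid point in its relative interior. -/
def IsGridEdge (F P : Set (ℝ × ℝ)) (u v : ℝ × ℝ) : Prop :=
  IsGridPoint F P u ∧ IsGridPoint F P v ∧ (u.1 = v.1 ∨ u.2 = v.2) ∧
    segment ℝ u v ⊆ F ∧ ∀ w ∈ openSegment ℝ u v, ¬ IsGridPoint F P w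

/-- A vertex of the configuration graph. -/
def ConfVertex (F P : Set (ℝ × ℝ)) (u : (ℝ × ℝ) × (ℝ × ℝ)) : Prop :=
  IsGridPoint F P u.1 ∧ IsGridPoint F P u.2 ∧ 1 ≤ linf (u.1 - u.2)

/-- An edge of the configuration graph. -/
def ConfEdge (F P : Set (ℝ × ℝ)) (u v : (ℝ × ℝ) × (ℝ × ℝ)) : Prop :=
  ConfVertex F P u ∧ ConfVertex F P v ∧
    ((u.1 = v.1 ∧ IsGridEdge F P u.2 v.2) ∨ (u.2 = v.2 ∧ IsGridEdge F P u.1 v.1))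

/-- A path in `S` from `p` to `q`. -/
def IsPathIn (S : Set (ℝ × ℝ)) (p q : ℝ × ℝ) (γ : ℝ → ℝ × ℝ) : Prop :=
  ContinuousOn γ (Icc 0 1) ∧ γ 0 = p ∧ γ 1 = q ∧ ∀ t ∈ Icc (0 : ℝ) 1, γ t ∈ S

/-- The ℓ₁-length of a path parameterized over `[0,1]`. -/
def pathLen (γ : ℝ → ℝ × ℝ) : ℝ≥0∞ := l1VarOn γ (Icc 0 1)

/-- A shortest path in `S` from `p` to `q` (w.r.t. ℓ₁-length). -/
def IsShortestPathIn (S : Set (ℝ × ℝ)) (p q : ℝ × ℝ) (γ : ℝ → ℝ × ℝ) : Prop :=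
  IsPathIn S p q γ ∧ ∀ γ', IsPathIn S p q γ' → pathLen γ ≤ pathLen γ'

/-- An x-monotone path. -/
def XMonotone (γ : ℝ → ℝ × ℝ) : Prop :=
  MonotoneOn (fun t => (γ t).1) (Icc 0 1) ∨ AntitoneOn (fun t => (γ t).1) (Icc 0 1)

/-- A y-monotone path. -/
def YMonotone (γ : ℝ → ℝ × ℝ) : Prop :=
  MonotoneOn (fun t => (γ t).2) (Icc 0 1) ∨ AntitoneOn (fun t => (γ t).2) (Icc 0 1)

/-- An xy-monotone path. -/
def XYMonotone (γ : ℝ → ℝ × ℝ) : Prop := XMonotone γ ∧ YMonotone γ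

/-- The union of the primary horizontal lines (horizontal 0-lines and 1-lines). -/
def primaryHorizSet (F P : Set (ℝ × ℝ)) : Set (ℝ × ℝ) :=
  {p | IsHorizLineY F P 1 p.2}

/-- A corridor: the closure of a connected component of `F` minus the primary horizontal
lines. -/
def IsCorridor (F P : Set (ℝ × ℝ)) (R : Set (ℝ × ℝ)) : Prop :=
  ∃ c ∈ F \ primaryHorizSet F P,
    R = closure (connectedComponentIn (F \ primaryHorizSet F P) c)

/-- `C` is a connected component of `S`. -/
def IsCompOf (S C : Set (ℝ × ℝ)) : Prop := ∃ c ∈ S, C = connectedComponentIn S c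

/-- An x-separated configuration. -/
def XSep (c : (ℝ × ℝ) × (ℝ × ℝ)) : Prop := 1 ≤ |c.1.1 - c.2.1|

/-- A y-separated configuration. -/
def YSep (c : (ℝ × ℝ) × (ℝ × ℝ)) : Prop := 1 ≤ |c.1.2 - c.2.2|

/-- Two configurations have the same x-order. -/
def SameXOrder (c d : (ℝ × ℝ) × (ℝ × ℝ)) : Prop :=
  Real.sign (c.1.1 - c.2.1) = Real.sign (d.1.1 - d.2.1)

/-- Two configurations have the same y-order. -/
def SameYOrder (c d : (ℝ × ℝ) × (ℝ × ℝ)) : Prop :=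
  Real.sign (c.1.2 - c.2.2) = Real.sign (d.1.2 - d.2.2)

/-- During `[a,b]` the path `γ` traverses (affinely) a straight axis-parallel segment
contained in `F` whose endpoints are grid points. -/
def MoveSeg (F P : Set (ℝ × ℝ)) (γ : ℝ → ℝ × ℝ) (a b : ℝ) : Prop :=
  IsGridPoint F P (γ a) ∧ IsGridPoint F P (γ b) ∧
    segment ℝ (γ a) (γ b) ⊆ F ∧
    ∃ v : ℝ × ℝ, (v.1 = 0 ∨ v.2 = 0) ∧ ∀ t ∈ Icc a b, γ t = γ a + (t - a) • v

/-- A canonical-grid plan: a rectilinear decoupled plan that is a finite concatenation of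
moves in each of which one robot is parked at a grid point while the other traverses a
straight axis-parallel segment of the grid contained in `F`; in particular, every
breakpoint of either robot path is a grid point. -/
def IsCanonicalGridPlan (F P : Set (ℝ × ℝ)) (pln : ℝ → (ℝ × ℝ) × (ℝ × ℝ)) : Prop :=
  IsRectilinearPlan pln ∧ IsDecoupled pln ∧
    ∃ (n : ℕ) (τ : ℕ → ℝ), τ 0 = 0 ∧ τ n = 1 ∧ (∀ i, i < n → τ i ≤ τ (i + 1)) ∧
      ∀ i, i < n →
        (IsGridPoint F P (pln (τ i)).1 ∧
            (∀ a ∈ Icc (τ i) (τ (i + 1)), (pln a).1 = (pln (τ i)).1) ∧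
            MoveSeg F P (fun t => (pln t).2) (τ i) (τ (i + 1))) ∨
        (IsGridPoint F P (pln (τ i)).2 ∧
            (∀ a ∈ Icc (τ i) (τ (i + 1)), (pln a).2 = (pln (τ i)).2) ∧
            MoveSeg F P (fun t => (pln t).1) (τ i) (τ (i + 1)))

/-- A path in the configuration graph from `s` to `t` with `k` edges. -/
def IsGraphPath (F P : Set (ℝ × ℝ)) (s t : (ℝ × ℝ) × (ℝ × ℝ)) (k : ℕ)
    (u : ℕ → (ℝ × ℝ) × (ℝ × ℝ)) : Prop :=
  u 0 = s ∧ u k = t ∧ ∀ j, j < k → ConfEdge F P (u j) (u (j + 1))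

/-- The total weight (ℓ₁-distance in `ℝ⁴`) of a path in the configuration graph. -/
def graphPathWeight (k : ℕ) (u : ℕ → (ℝ × ℝ) × (ℝ × ℝ)) : ℝ :=
  ∑ j ∈ Finset.range k, (l1 ((u (j + 1)).1 - (u j).1) + l1 ((u (j + 1)).2 - (u j).2))

/-- `pln` traverses the edges of the graph path `u` one after another (linearly
interpolating along each edge). -/
def IsEdgeTraversal (pln : ℝ → (ℝ × ℝ) × (ℝ × ℝ)) (k : ℕ)
    (u : ℕ → (ℝ × ℝ) × (ℝ × ℝ)) : Prop :=
  (k = 0 → ∀ a ∈ Icc (0 : ℝ) 1, pln a = u 0) ∧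
    ∀ j, j < k → ∀ a ∈ Icc ((j : ℝ) / k) (((j : ℝ) + 1) / k),
      pln a = u j + ((a - (j : ℝ) / k) * k) • (u (j + 1) - u j)

/-- A blocked pair for the corridor `[xlo,xhi] × [ylo,yhi]`. -/
def BlockedPair (F : Set (ℝ × ℝ)) (xlo xhi ylo yhi : ℝ) (u v : ℝ × ℝ) : Prop :=
  ∃ ρ ρ' edge : Set (ℝ × ℝ),
    ((ρ = Ico (xlo - 1) xlo ×ˢ Ico (ylo - 1) ylo ∧
        ρ' = Ico (xlo - 1) xlo ×ˢ Ioc yhi (yhi + 1) ∧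
        edge = ({xlo} : Set ℝ) ×ˢ Icc (ylo - 1) (yhi + 1)) ∨
      (ρ = Ioc xhi (xhi + 1) ×ˢ Ico (ylo - 1) ylo ∧
        ρ' = Ioc xhi (xhi + 1) ×ˢ Ioc yhi (yhi + 1) ∧
        edge = ({xhi} : Set ℝ) ×ˢ Icc (ylo - 1) (yhi + 1))) ∧
    ∃ φ φ' : Set (ℝ × ℝ), IsCompOf (ρ ∩ F) φ ∧ IsCompOf (ρ' ∩ F) φ' ∧
      (closure φ ∩ edge).Nonempty ∧ (closure φ' ∩ edge).Nonempty ∧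
      ((u ∈ φ ∧ v ∈ φ') ∨ (u ∈ φ' ∧ v ∈ φ))

/-- `[ν₁,ν₂] ⊆ [lam1,lam2]` is an unsafe interval for the plan `pln` w.r.t. the influence
region `IR`. -/
def IsUnsafeInterval (IR : Set (ℝ × ℝ)) (pln : ℝ → (ℝ × ℝ) × (ℝ × ℝ))
    (lam1 lam2 ν₁ ν₂ : ℝ) : Prop :=
  lam1 ≤ ν₁ ∧ ν₁ ≤ ν₂ ∧ ν₂ ≤ lam2 ∧
    (∀ ν ∈ Icc ν₁ ν₂, (pln ν).2 ∈ IR ∧ YSep (pln ν)) ∧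
    (∀ a b : ℝ, lam1 ≤ a → a ≤ ν₁ → ν₂ ≤ b → b ≤ lam2 →
      (∀ ν ∈ Icc a b, (pln ν).2 ∈ IR ∧ YSep (pln ν)) → a = ν₁ ∧ b = ν₂) ∧
    ∃ ν ∈ Icc ν₁ ν₂, ¬ XSep (pln ν)


/-- There is a path in `F` from `u` to `v` of ℓ₁-length at most `L`. -/
def DR (F : Set (ℝ × ℝ)) (u v : ℝ × ℝ) (L : ℝ≥0∞) : Prop :=
  ∃ γ, IsPathIn F u v γ ∧ pathLen γ ≤ L

lemma edist_l1 (u v : ℝ × ℝ) :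
    edist ((WithLp.equiv 1 (ℝ × ℝ)).symm u) ((WithLp.equiv 1 (ℝ × ℝ)).symm v)
      = ENNReal.ofReal (|u.1 - v.1| + |u.2 - v.2|) := by
  rw [WithLp.prod_edist_eq_of_L1, ENNReal.ofReal_add (abs_nonneg _) (abs_nonneg _)]
  simp [edist_dist, Real.dist_eq]

lemma DR.mono {F : Set (ℝ × ℝ)} {u v : ℝ × ℝ} {L L' : ℝ≥0∞} (h : DR F u v L) (hL : L ≤ L') :
    DR F u v L' := by
  obtain ⟨γ, h1, h2⟩ := h
  exact ⟨γ, h1, h2.trans hL⟩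

lemma DR.symm {F : Set (ℝ × ℝ)} {u v : ℝ × ℝ} {L : ℝ≥0∞} (h : DR F u v L) : DR F v u L := by
  obtain ⟨γ, ⟨h1, h2, h3, h4⟩, h5⟩ := h
  have hm : MapsTo (fun t : ℝ => 1 - t) (Icc 0 1) (Icc 0 1) := by
    intro t ht; simp only [mem_Icc] at *; constructor <;> linarith [ht.1, ht.2]
  refine ⟨fun t => γ (1 - t), ⟨?_, by simp [h3], by simp [h2], fun t ht => h4 _ (hm ht)⟩, ?_⟩
  · exact h1.comp (by fun_prop) hm
  · refine le_trans ?_ h5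
    exact eVariationOn.comp_le_of_antitoneOn (fun t => (WithLp.equiv 1 (ℝ × ℝ)).symm (γ t))
      (fun t : ℝ => 1 - t) (fun a _ b _ hab => by
        change 1 - b ≤ 1 - a; linarith) hm

lemma DR.of_sub {F : Set (ℝ × ℝ)} {g : ℝ → ℝ × ℝ} (hc : ContinuousOn g (Icc 0 1))
    (hF : ∀ t ∈ Icc (0 : ℝ) 1, g t ∈ F) {a b : ℝ} (ha : 0 ≤ a) (hab : a ≤ b) (hb : b ≤ 1) :
    DR F (g a) (g b) (l1VarOn g (Icc a b)) := by
  have hm : MapsTo (fun t : ℝ => a + t * (b - a)) (Icc 0 1) (Icc a b) := by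
    intro t ht; simp only [mem_Icc] at *; constructor <;> nlinarith [ht.1, ht.2]
  have hs : Icc a b ⊆ Icc 0 1 := Icc_subset_Icc ha hb
  refine ⟨fun t => g (a + t * (b - a)), ⟨?_, by simp, by simp, fun t ht => hF _ (hs (hm ht))⟩, ?_⟩
  · exact (hc.mono hs).comp (by fun_prop) hm
  · exact eVariationOn.comp_le_of_monotoneOn (fun t => (WithLp.equiv 1 (ℝ × ℝ)).symm (g t))
      (fun t : ℝ => a + t * (b - a)) (fun x _ y _ hxy => by
        have := mul_le_mul_of_nonneg_right hxy (sub_nonneg.2 hab)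
        simpa using this) hm

lemma DR.trans {F : Set (ℝ × ℝ)} {u v w : ℝ × ℝ} {L L' : ℝ≥0∞} (h : DR F u v L)
    (h' : DR F v w L') : DR F u w (L + L') := by
  obtain ⟨γ, ⟨h1, h2, h3, h4⟩, h5⟩ := h
  obtain ⟨γ', ⟨k1, k2, k3, k4⟩, k5⟩ := h'
  set f : ℝ → ℝ × ℝ := fun t => if t ≤ 1 / 2 then γ (2 * t) else γ' (2 * t - 1) with hf
  have hm1 : MapsTo (fun t : ℝ => 2 * t) (Icc 0 (1 / 2)) (Icc 0 1) := by
    intro t ht; simp only [mem_Icc] at *; constructor <;> linarith [ht.1, ht.2]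
  have hm2 : MapsTo (fun t : ℝ => 2 * t - 1) (Icc (1 / 2) 1) (Icc 0 1) := by
    intro t ht; simp only [mem_Icc] at *; constructor <;> linarith [ht.1, ht.2]
  have e1 : EqOn f (fun t => γ (2 * t)) (Icc 0 (1 / 2)) := by
    intro t ht; simp only [hf]; rw [if_pos ht.2]
  have e2 : EqOn f (fun t => γ' (2 * t - 1)) (Icc (1 / 2) 1) := by
    intro t ht; simp only [hf]
    split_ifs with h
    · have : t = 1 / 2 := le_antisymm h ht.1
      subst this; norm_num [h3, k2]
    · rfl
  have c1 : ContinuousOn f (Icc 0 (1 / 2)) :=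
    (ContinuousOn.comp h1 (by fun_prop) hm1).congr e1
  have c2 : ContinuousOn f (Icc (1 / 2) 1) :=
    (ContinuousOn.comp k1 (by fun_prop) hm2).congr e2
  have hU : Icc (0 : ℝ) 1 = Icc 0 (1 / 2) ∪ Icc (1 / 2) 1 :=
    (Icc_union_Icc_eq_Icc (by norm_num) (by norm_num)).symm
  refine ⟨f, ⟨?_, ?_, ?_, ?_⟩, ?_⟩
  · rw [hU]; exact c1.union_of_isClosed c2 isClosed_Icc isClosed_Icc
  · rw [e1 (by norm_num)]; simpa using h2
  · rw [e2 (by norm_num)]; norm_num [k3]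
  · intro t ht
    rw [hU] at ht
    rcases ht with ht | ht
    · rw [e1 ht]; exact h4 _ (hm1 ht)
    · rw [e2 ht]; exact k4 _ (hm2 ht)
  · unfold pathLen l1VarOn at *
    have := eVariationOn.Icc_add_Icc (fun t => (WithLp.equiv 1 (ℝ × ℝ)).symm (f t))
      (s := univ) (a := 0) (b := 1 / 2) (c := 1) (by norm_num) (by norm_num) (mem_univ _)
    simp only [univ_inter] at this
    rw [← this]
    refine add_le_add (le_trans ?_ h5) (le_trans ?_ k5)
    · rw [eVariationOn.congr (g := (fun t => (WithLp.equiv 1 (ℝ × ℝ)).symm (γ t)) ∘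
        fun t : ℝ => 2 * t) (fun t ht => by simp [e1 ht])]
      exact eVariationOn.comp_le_of_monotoneOn _ _ (fun x _ y _ hxy => by
        change 2 * x ≤ 2 * y; linarith) hm1
    · rw [eVariationOn.congr (g := (fun t => (WithLp.equiv 1 (ℝ × ℝ)).symm (γ' t)) ∘
        fun t : ℝ => 2 * t - 1) (fun t ht => by simp [e2 ht])]
      exact eVariationOn.comp_le_of_monotoneOn _ _ (fun x _ y _ hxy => by
        change 2 * x - 1 ≤ 2 * y - 1; linarith) hm2

lemma DR.of_box {F : Set (ℝ × ℝ)} {u v : ℝ × ℝ}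
    (h : ∀ w : ℝ × ℝ, w.1 ∈ uIcc u.1 v.1 → w.2 ∈ uIcc u.2 v.2 → w ∈ F) :
    DR F u v (ENNReal.ofReal (|u.1 - v.1| + |u.2 - v.2|)) := by
  refine ⟨fun t => u + t • (v - u), ⟨by fun_prop, by simp, by simp, ?_⟩, ?_⟩
  · intro t ht
    have key : ∀ a b : ℝ, a + t * (b - a) ∈ uIcc a b := by
      intro a b
      rw [← segment_eq_uIcc]
      refine ⟨1 - t, t, by linarith [ht.2], ht.1, by ring, ?_⟩
      simp; ring
    exact h _ (by simpa using key u.1 v.1) (by simpa using key u.2 v.2)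
  · unfold pathLen l1VarOn
    have hl : LipschitzOnWith (Real.toNNReal (|u.1 - v.1| + |u.2 - v.2|))
        (fun t : ℝ => (WithLp.equiv 1 (ℝ × ℝ)).symm (u + t • (v - u))) univ := by
      intro s _ t _
      rw [edist_l1, edist_dist, Real.dist_eq]
      rw [show ((Real.toNNReal (|u.1 - v.1| + |u.2 - v.2|) : NNReal) : ℝ≥0∞) =
        ENNReal.ofReal (|u.1 - v.1| + |u.2 - v.2|) from rfl,
        ← ENNReal.ofReal_mul (by positivity)]
      apply ENNReal.ofReal_le_ofReal
      have key : ∀ a b : ℝ, |a + s * (b - a) - (a + t * (b - a))| = |a - b| * |s - t| := by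
        intro a b
        rw [← abs_mul, ← abs_neg]; congr 1; ring
      simp only [Prod.fst_add, Prod.snd_add, Prod.smul_fst, Prod.smul_snd, Prod.fst_sub,
        Prod.snd_sub, smul_eq_mul, key]
      linarith
    have := hl.comp_eVariationOn_le (g := fun t : ℝ => t) (s := Icc 0 1) (fun _ _ => mem_univ _)
    refine le_trans this ?_
    have h2 : eVariationOn (fun t : ℝ => t) (Icc (0 : ℝ) 1) ≤ 1 := by
      have := (monotoneOn_id (s := Icc (0 : ℝ) 1)).eVariationOn_eq (a := 0) (b := 1)
        (by simp) (by simp)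
      rw [inter_self] at this
      exact le_of_eq (this.trans (by simp))
    calc _ ≤ ENNReal.ofReal (|u.1 - v.1| + |u.2 - v.2|) * 1 := by
          gcongr; rfl
      _ = _ := mul_one _

lemma DR.flipx {F : Set (ℝ × ℝ)} {u v : ℝ × ℝ} {L : ℝ≥0∞}
    (h : DR ((fun z : ℝ × ℝ => (-z.1, z.2)) ⁻¹' F) u v L) :
    DR F (-u.1, u.2) (-v.1, v.2) L := by
  obtain ⟨γ, ⟨h1, h2, h3, h4⟩, h5⟩ := h
  refine ⟨fun t => (-(γ t).1, (γ t).2), ⟨by fun_prop, by simp [h2], by simp [h3],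
    fun t ht => h4 t ht⟩, le_trans (le_of_eq ?_) h5⟩
  unfold pathLen l1VarOn eVariationOn
  simp only [edist_l1]
  have key : ∀ a b : ℝ, |-a - -b| = |a - b| := by
    intro a b
    rw [← abs_neg]; congr 1; ring
  simp only [key]

lemma DR.flipy {F : Set (ℝ × ℝ)} {u v : ℝ × ℝ} {L : ℝ≥0∞}
    (h : DR ((fun z : ℝ × ℝ => (z.1, -z.2)) ⁻¹' F) u v L) :
    DR F (u.1, -u.2) (v.1, -v.2) L := by
  obtain ⟨γ, ⟨h1, h2, h3, h4⟩, h5⟩ := h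
  refine ⟨fun t => ((γ t).1, -(γ t).2), ⟨by fun_prop, by simp [h2], by simp [h3],
    fun t ht => h4 t ht⟩, le_trans (le_of_eq ?_) h5⟩
  unfold pathLen l1VarOn eVariationOn
  simp only [edist_l1]
  have key : ∀ a b : ℝ, |-a - -b| = |a - b| := by
    intro a b
    rw [← abs_neg]; congr 1; ring
  simp only [key]

/-- Every point outside `F` lies in an open box with sides longer than `1` that misses `F`. -/
def SqProp (F : Set (ℝ × ℝ)) : Prop :=
  ∀ x y : ℝ, (x, y) ∉ F → ∃ a b c d : ℝ, a < x ∧ x < b ∧ c < y ∧ y < d ∧ a + 1 < b ∧ c + 1 < d ∧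
    ∀ x' y' : ℝ, a < x' → x' < b → c < y' → y' < d → (x', y') ∉ F

def LB (F : Set (ℝ × ℝ)) : Prop :=
  ∀ z ∈ F, ∃ δ > 0, ∀ w ∈ F, |w.1 - z.1| < δ → |w.2 - z.2| < δ →
    ∀ v : ℝ × ℝ, v.1 ∈ uIcc z.1 w.1 → v.2 ∈ uIcc z.2 w.2 → v ∈ F

structure Nice (F : Set (ℝ × ℝ)) : Prop where
  closed : IsClosed F
  sq : SqProp F
  lb : LB F

lemma Nice.flipx {F : Set (ℝ × ℝ)} (h : Nice F) :
    Nice ((fun z : ℝ × ℝ => (-z.1, z.2)) ⁻¹' F) := by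
  refine ⟨h.closed.preimage (by fun_prop), ?_, ?_⟩
  · intro x y hxy
    obtain ⟨a, b, c, d, h1, h2, h3, h4, h5, h6, h7⟩ := h.sq (-x) y hxy
    exact ⟨-b, -a, c, d, by linarith, by linarith, h3, h4, by linarith, h6,
      fun x' y' i1 i2 i3 i4 => h7 (-x') y' (by linarith) (by linarith) i3 i4⟩
  · intro z hz
    obtain ⟨δ, hδ, hh⟩ := h.lb _ hz
    refine ⟨δ, hδ, fun w hw h1 h2 v hv1 hv2 => hh _ hw ?_ h2 (-v.1, v.2) ?_ hv2⟩
    · simp only; rw [← abs_neg]; convert h1 using 2; ring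
    · simp only [mem_uIcc] at *
      rcases hv1 with hv | hv
      · right; constructor <;> linarith [hv.1, hv.2]
      · left; constructor <;> linarith [hv.1, hv.2]

lemma Nice.flipy {F : Set (ℝ × ℝ)} (h : Nice F) :
    Nice ((fun z : ℝ × ℝ => (z.1, -z.2)) ⁻¹' F) := by
  refine ⟨h.closed.preimage (by fun_prop), ?_, ?_⟩
  · intro x y hxy
    obtain ⟨a, b, c, d, h1, h2, h3, h4, h5, h6, h7⟩ := h.sq x (-y) hxy
    exact ⟨a, b, -d, -c, h1, h2, by linarith, by linarith, h5, by linarith,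
      fun x' y' i1 i2 i3 i4 => h7 x' (-y') i1 i2 (by linarith) (by linarith)⟩
  · intro z hz
    obtain ⟨δ, hδ, hh⟩ := h.lb _ hz
    refine ⟨δ, hδ, fun w hw h1 h2 v hv1 hv2 => hh _ hw h1 ?_ (v.1, -v.2) hv1 ?_⟩
    · simp only; rw [← abs_neg]; convert h2 using 2; ring
    · simp only [mem_uIcc] at *
      rcases hv2 with hv | hv
      · right; constructor <;> linarith [hv.1, hv.2]
      · left; constructor <;> linarith [hv.1, hv.2]

lemma Nice.vert {F : Set (ℝ × ℝ)} (h : Nice F) {x y1 y2 y : ℝ} (h1 : (x, y1) ∈ F)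
    (h2 : (x, y2) ∈ F) (h12 : y2 ≤ y1 + 1) (hy1 : y1 ≤ y) (hy2 : y ≤ y2) : (x, y) ∈ F := by
  by_contra hn
  obtain ⟨a, b, c, d, k1, k2, k3, k4, k5, k6, k7⟩ := h.sq _ _ hn
  by_cases hc : c < y1
  · exact k7 x y1 k1 k2 hc (by linarith) h1
  · exact k7 x y2 k1 k2 (by linarith) (by linarith) h2

lemma Nice.horiz {F : Set (ℝ × ℝ)} (h : Nice F) {y x1 x2 x : ℝ} (h1 : (x1, y) ∈ F)
    (h2 : (x2, y) ∈ F) (h12 : x2 ≤ x1 + 1) (hx1 : x1 ≤ x) (hx2 : x ≤ x2) : (x, y) ∈ F := by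
  by_contra hn
  obtain ⟨a, b, c, d, k1, k2, k3, k4, k5, k6, k7⟩ := h.sq _ _ hn
  by_cases hc : a < x1
  · exact k7 x1 y hc (by linarith) k3 k4 h1
  · exact k7 x2 y (by linarith) (by linarith) k3 k4 h2

lemma DR.vert {F : Set (ℝ × ℝ)} (h : Nice F) {x y1 y2 : ℝ} (h1 : (x, y1) ∈ F)
    (h2 : (x, y2) ∈ F) (h12 : |y1 - y2| ≤ 1) :
    DR F (x, y1) (x, y2) (ENNReal.ofReal |y1 - y2|) := by
  have := DR.of_box (F := F) (u := (x, y1)) (v := (x, y2)) (by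
    rintro ⟨a, b⟩ ha hb
    simp only [uIcc_self, mem_singleton_iff] at ha
    subst ha
    rw [abs_le] at h12
    rcases mem_uIcc.1 hb with hb | hb
    · exact h.vert h1 h2 (by linarith) hb.1 hb.2
    · exact h.vert h2 h1 (by linarith) hb.1 hb.2)
  simpa using this

lemma cap_sep {F G : Set (ℝ × ℝ)} (h : Nice F) {X Y Y0 : ℝ} {z q r : ℝ × ℝ}
    (hXY : (X, Y) ∈ F) (hY : Y0 < Y)
    (hblock : ∀ x y, X < x → x ≤ X + 1 → Y0 < y → y < Y → (x, y) ∉ F)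
    (hG : IsPreconnected G) (hGF : G ⊆ F) (hGb : ∀ w ∈ G, w.1 ≤ X + 1 ∧ w.2 ≤ Y + 1)
    (hq : q ∈ G) (hr : r ∈ G) (hrX : r.1 ≤ X) (hzF : z ∈ F)
    (hz1 : X < z.1) (hz1' : z.1 ≤ q.1) (hz2 : Y ≤ z.2) (hz2' : z.2 ≤ q.2)
    (row : ∀ x, X ≤ x → x < z.1 → (x, z.2) ∉ F)
    (col : ∀ y, Y ≤ y → y < z.2 → (z.1, y) ∉ F) : False := by
  have hqb := hGb q hq
  have hUL : ∀ x y, X ≤ x → x < z.1 → z.2 ≤ y → y ≤ Y + 1 → (x, y) ∉ F := by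
    intro x y i1 i2 i3 i4
    obtain ⟨a, b, c, d, k1, k2, k3, k4, k5, k6, k7⟩ := h.sq _ _ (row x i1 i2)
    have hb : b ≤ z.1 := by
      by_contra hb
      exact k7 z.1 z.2 (by linarith) (by linarith) k3 k4 hzF
    have hc : Y ≤ c := by
      by_contra hc
      exact k7 X Y (by linarith) (by linarith) (by linarith) (by linarith) hXY
    exact k7 x y k1 k2 (by linarith) (by linarith)
  have hLR : ∀ x y, z.1 ≤ x → x ≤ X + 1 → Y ≤ y → y < z.2 → (x, y) ∉ F := by
    intro x y i1 i2 i3 i4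
    obtain ⟨a, b, c, d, k1, k2, k3, k4, k5, k6, k7⟩ := h.sq _ _ (col y i3 i4)
    have hd : d ≤ z.2 := by
      by_contra hd
      exact k7 z.1 z.2 k1 k2 (by linarith) (by linarith) hzF
    have ha : X ≤ a := by
      by_contra ha
      exact k7 X Y (by linarith) (by linarith) (by linarith) (by linarith) hXY
    exact k7 x y (by linarith) (by linarith) k3 k4
  set U : Set (ℝ × ℝ) := {w | z.1 ≤ w.1 ∧ z.2 ≤ w.2} with hU
  have hUc : IsClosed U :=
    (isClosed_le continuous_const continuous_fst).inter
      (isClosed_le continuous_const continuous_snd)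
  have key : ∀ w ∈ G, w ∈ U → w ∉ closure (G \ U) := by
    intro w hw hwU hcl
    obtain ⟨δ, hδ, hb⟩ := h.lb w (hGF hw)
    have hε : 0 < min δ (min (z.1 - X) (Y - Y0)) := by
      refine lt_min hδ (lt_min ?_ ?_) <;> linarith
    obtain ⟨w', ⟨hw'G, hw'U⟩, hd⟩ := Metric.mem_closure_iff.1 hcl _ hε
    rw [dist_comm, Prod.dist_eq, max_lt_iff, Real.dist_eq, Real.dist_eq] at hd
    obtain ⟨d1, d2⟩ := hd
    simp only [lt_min_iff] at d1 d2
    obtain ⟨d1, d1', -⟩ := d1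
    obtain ⟨d2, -, d2'⟩ := d2
    have hull := hb w' (hGF hw'G) d1 d2
    have hb' := hGb w' hw'G
    obtain ⟨w1, w2⟩ := hwU
    rw [abs_lt] at d1' d2'
    by_cases c1 : w'.1 < z.1
    · by_cases c2 : z.2 ≤ w'.2
      · exact hUL w'.1 w'.2 (by linarith) c1 c2 hb'.2 (hGF hw'G)
      · refine row w'.1 (by linarith) c1 (hull (w'.1, z.2) right_mem_uIcc ?_)
        rw [mem_uIcc]; right; exact ⟨by linarith, w2⟩
    · have c2 : w'.2 < z.2 := by
        by_contra c2
        exact hw'U ⟨by linarith, by linarith⟩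
      by_cases c3 : Y ≤ w'.2
      · exact hLR w'.1 w'.2 (by linarith) hb'.1 c3 c2 (hGF hw'G)
      · exact hblock w'.1 w'.2 (by linarith) hb'.1 (by linarith) (by linarith) (hGF hw'G)
  obtain ⟨v, hvG, hv1, hv2⟩ := hG (closure (G \ U))ᶜ Uᶜ isClosed_closure.isOpen_compl
    hUc.isOpen_compl (fun w hw => by
      by_cases hwU : w ∈ U
      · exact Or.inl (key w hw hwU)
      · exact Or.inr hwU)
    ⟨q, hq, key q hq ⟨hz1', hz2'⟩⟩
    ⟨r, hr, fun hrU => by linarith [hrU.1]⟩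
  exact hv1 (subset_closure ⟨hvG, hv2⟩)

lemma cap {F G : Set (ℝ × ℝ)} (h : Nice F) {X Y Y0 x1 : ℝ} {q r : ℝ × ℝ}
    (hXY : (X, Y) ∈ F) (hY : Y0 < Y)
    (hblock : ∀ x y, X < x → x ≤ X + 1 → Y0 < y → y < Y → (x, y) ∉ F)
    (hG : IsPreconnected G) (hGF : G ⊆ F) (hGb : ∀ w ∈ G, w.1 ≤ X + 1 ∧ w.2 ≤ Y + 1)
    (hq : q ∈ G) (hr : r ∈ G) (hrX : r.1 ≤ X) (hqY : Y ≤ q.2)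
    (hx1 : X ≤ x1) (hx1q : x1 ≤ q.1) :
    ∃ y', Y ≤ y' ∧ y' ≤ q.2 ∧ (x1, y') ∈ F ∧
      DR F q (x1, y') (ENNReal.ofReal (q.1 - x1 + (q.2 - y'))) := by
  have hqb := hGb q hq
  set M : Set (ℝ × ℝ) := {z | z ∈ F ∧ (x1 ≤ z.1 ∧ z.1 ≤ q.1) ∧ (Y ≤ z.2 ∧ z.2 ≤ q.2) ∧
    DR F q z (ENNReal.ofReal (q.1 - z.1 + (q.2 - z.2)))} with hM
  have hqM : q ∈ M := by
    refine ⟨hGF hq, ⟨hx1q, le_rfl⟩, ⟨hqY, le_rfl⟩, ?_⟩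
    have := DR.of_box (F := F) (u := q) (v := q) (by
      rintro ⟨a, b⟩ ha hb
      simp only [uIcc_self, mem_singleton_iff] at ha hb
      subst ha hb
      exact hGF hq)
    simpa using this
  -- extending a member of `M` down-left
  have ext : ∀ w ∈ M, ∀ m : ℝ × ℝ, x1 ≤ m.1 → m.1 ≤ w.1 → Y ≤ m.2 → m.2 ≤ w.2 →
      (∀ v : ℝ × ℝ, v.1 ∈ uIcc w.1 m.1 → v.2 ∈ uIcc w.2 m.2 → v ∈ F) → m ∈ M := by
    rintro w ⟨w1, w2, w3, w4⟩ m m1 m2 m3 m4 hv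
    refine ⟨hv m right_mem_uIcc right_mem_uIcc, ⟨m1, by linarith⟩, ⟨m3, by linarith⟩, ?_⟩
    have := w4.trans (DR.of_box hv)
    rw [← ENNReal.ofReal_add (by linarith) (by positivity), abs_of_nonneg (by linarith),
      abs_of_nonneg (by linarith)] at this
    convert this using 2
    ring
  have hMsub : M ⊆ Icc x1 q.1 ×ˢ Icc Y q.2 := fun z hz => ⟨hz.2.1, hz.2.2.1⟩
  have hKc : IsCompact (Icc x1 q.1 ×ˢ Icc Y q.2) := isCompact_Icc.prod isCompact_Icc
  have hclsub : closure M ⊆ Icc x1 q.1 ×ˢ Icc Y q.2 := closure_minimal hMsub hKc.isClosed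
  have hclF : closure M ⊆ F := closure_minimal (fun z hz => hz.1) h.closed
  obtain ⟨z, hzc, hzmin⟩ := (hKc.of_isClosed_subset isClosed_closure hclsub).exists_isMinOn
    ⟨q, subset_closure hqM⟩ (f := fun z : ℝ × ℝ => z.1 + z.2) (by fun_prop)
  have hmin : ∀ m ∈ M, z.1 + z.2 ≤ m.1 + m.2 := fun m hm => hzmin (subset_closure hm)
  have hzM : z ∈ M := by
    obtain ⟨δ, hδ, hb⟩ := h.lb z (hclF hzc)
    obtain ⟨w, hwM, hd⟩ := Metric.mem_closure_iff.1 hzc _ hδ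
    rw [dist_comm, Prod.dist_eq, max_lt_iff, Real.dist_eq, Real.dist_eq] at hd
    have hull := hb w hwM.1 hd.1 hd.2
    have hzb := hclsub hzc
    have hm : (min w.1 z.1, min w.2 z.2) ∈ M := by
      refine ext w hwM _ (le_min hwM.2.1.1 hzb.1.1) (min_le_left _ _)
        (le_min hwM.2.2.1.1 hzb.2.1) (min_le_left _ _) ?_
      intro v v1 v2
      refine hull v (uIcc_subset_uIcc right_mem_uIcc ?_ v1) (uIcc_subset_uIcc right_mem_uIcc ?_ v2)
      · rw [uIcc_comm]; exact ⟨le_rfl, (min_le_left _ _).trans le_sup_left⟩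
      · rw [uIcc_comm]; exact ⟨le_rfl, (min_le_left _ _).trans le_sup_left⟩
    have h1 := hmin _ hm
    simp only at h1
    have e1 : min w.1 z.1 = z.1 := by
      linarith [min_le_right w.1 z.1, min_le_right w.2 z.2]
    have e2 : min w.2 z.2 = z.2 := by
      linarith [min_le_right w.1 z.1, min_le_right w.2 z.2]
    rw [e1, e2] at hm
    exact hm
  obtain ⟨zF, ⟨z1, z1'⟩, ⟨z2, z2'⟩, zD⟩ := id hzM
  rcases z1.eq_or_lt with he | hlt
  · refine ⟨z.2, z2, z2', ?_, ?_⟩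
    · rw [he]; exact zF
    · rw [he]; exact zD
  exfalso
  refine cap_sep h hXY hY hblock hG hGF hGb hq hr hrX zF (by linarith) z1' z2 z2' ?_ ?_
  · intro x hx hxz hxF
    have hm : (max x x1, z.2) ∈ M := by
      refine ext z hzM _ (le_max_right _ _) (max_le hxz.le hlt.le) z2 le_rfl ?_
      rintro ⟨v1, v2⟩ hv1 hv2
      simp only [uIcc_self, mem_singleton_iff] at hv2
      subst hv2
      rw [uIcc_of_ge (max_le hxz.le hlt.le)] at hv1
      exact h.horiz hxF zF (by linarith) ((le_max_left _ _).trans hv1.1) hv1.2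
    have := hmin _ hm
    have h2 : max x x1 < z.1 := max_lt hxz hlt
    simp only at this
    linarith
  · intro y hy hyz hyF
    have hm : (z.1, y) ∈ M := by
      refine ext z hzM _ z1 le_rfl hy hyz.le ?_
      rintro ⟨v1, v2⟩ hv1 hv2
      simp only [uIcc_self, mem_singleton_iff] at hv1
      subst hv1
      rw [uIcc_of_ge hyz.le] at hv2
      exact h.vert hyF zF (by linarith) hv2.1 hv2.2
    have := hmin _ hm
    simp only at this
    linarith

lemma capL {F G : Set (ℝ × ℝ)} (h : Nice F) {X Y Y0 x1 : ℝ} {q r : ℝ × ℝ}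
    (hXY : (X, Y) ∈ F) (hY : Y0 < Y)
    (hblock : ∀ x y, x < X → X - 1 ≤ x → Y0 < y → y < Y → (x, y) ∉ F)
    (hG : IsPreconnected G) (hGF : G ⊆ F) (hGb : ∀ w ∈ G, X - 1 ≤ w.1 ∧ w.2 ≤ Y + 1)
    (hq : q ∈ G) (hr : r ∈ G) (hrX : X ≤ r.1) (hqY : Y ≤ q.2)
    (hx1 : x1 ≤ X) (hx1q : q.1 ≤ x1) :
    ∃ y', Y ≤ y' ∧ y' ≤ q.2 ∧ (x1, y') ∈ F ∧
      DR F q (x1, y') (ENNReal.ofReal (x1 - q.1 + (q.2 - y'))) := by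
  obtain ⟨y', h1, h2, h3, h4⟩ := cap (G := (fun z : ℝ × ℝ => (-z.1, z.2)) '' G) h.flipx
    (X := -X) (Y := Y) (Y0 := Y0) (x1 := -x1) (q := (-q.1, q.2)) (r := (-r.1, r.2))
    (by simpa using hXY) hY
    (fun x y i1 i2 i3 i4 => hblock (-x) y (by linarith) (by linarith) i3 i4)
    (hG.image _ (by fun_prop))
    (by rintro _ ⟨w, hw, rfl⟩; simpa using hGF hw)
    (by
      rintro _ ⟨w, hw, rfl⟩
      have := hGb w hw
      exact ⟨by simp only; linarith, this.2⟩)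
    ⟨q, hq, rfl⟩ ⟨r, hr, rfl⟩ (by simpa using hrX) hqY (by simpa using hx1) (by simpa using hx1q)
  refine ⟨y', h1, h2, by simpa using h3, ?_⟩
  have := h4.flipx
  simp only [neg_neg] at this
  convert this using 2
  ring

lemma sideUp {F G : Set (ℝ × ℝ)} (h : Nice F) {xlo xhi ylo yhi : ℝ} {p q r : ℝ × ℝ}
    (hx : xlo ≤ xhi) (hy : ylo < yhi)
    (htop : ∀ x, xlo ≤ x → x ≤ xhi → (x, yhi) ∈ F)
    (hR : ∀ x y, xhi < x → x ≤ xhi + 1 → ylo < y → y < yhi → (x, y) ∉ F)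
    (hL : ∀ x y, x < xlo → xlo - 1 ≤ x → ylo < y → y < yhi → (x, y) ∉ F)
    (hG : IsPreconnected G) (hGF : G ⊆ F)
    (hGb : ∀ w ∈ G, xlo - 1 ≤ w.1 ∧ w.1 ≤ xhi + 1 ∧ w.2 ≤ yhi + 1)
    (hr : r ∈ G) (hr1 : xlo ≤ r.1) (hr2 : r.1 ≤ xhi)
    (hp : p ∈ G) (hq : q ∈ G) (hpy : yhi ≤ p.2) (hqy : yhi ≤ q.2) :
    DR F p q (ENNReal.ofReal (|p.1 - q.1| + (p.2 - yhi) + (q.2 - yhi))) := by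
  wlog hpq : p.1 ≤ q.1 generalizing p q
  · have := (this hq hp hqy hpy (by linarith)).symm
    rw [abs_sub_comm] at this
    convert this using 2
    ring
  have cR := fun {q : ℝ × ℝ} {x1 : ℝ} (hq : q ∈ G) (hqY : yhi ≤ q.2) (hx1 : xhi ≤ x1)
    (hx1q : x1 ≤ q.1) => cap h (htop xhi hx le_rfl) hy hR hG hGF
      (fun w hw => ⟨(hGb w hw).2.1, (hGb w hw).2.2⟩) hq hr hr2 hqY hx1 hx1q
  have cL := fun {q : ℝ × ℝ} {x1 : ℝ} (hq : q ∈ G) (hqY : yhi ≤ q.2) (hx1 : x1 ≤ xlo)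
    (hx1q : q.1 ≤ x1) => capL h (htop xlo le_rfl hx) hy hL hG hGF
      (fun w hw => ⟨(hGb w hw).1, (hGb w hw).2.2⟩) hq hr hr1 hqY hx1 hx1q
  have bp := hGb p hp
  have bq := hGb q hq
  have foot : ∀ w ∈ G, yhi ≤ w.2 → DR F w (max xlo (min w.1 xhi), yhi)
      (ENNReal.ofReal (|w.1 - max xlo (min w.1 xhi)| + (w.2 - yhi))) := by
    intro w hw hwy
    have bw := hGb w hw
    rcases lt_or_ge xhi w.1 with c | c
    · obtain ⟨y', h1, h2, h3, h4⟩ := cR hw hwy le_rfl c.le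
      rw [min_eq_right c.le, max_eq_right hx, abs_of_nonneg (by linarith)]
      have := h4.trans (DR.vert h h3 (htop xhi hx le_rfl) (by rw [abs_le]; constructor <;> linarith))
      rw [← ENNReal.ofReal_add (by linarith) (by positivity), abs_of_nonneg (by linarith)] at this
      convert this using 2
      ring
    · rw [min_eq_left c]
      rcases lt_or_ge w.1 xlo with c' | c'
      · obtain ⟨y', h1, h2, h3, h4⟩ := cL hw hwy le_rfl c'.le
        rw [max_eq_left c'.le, abs_of_nonpos (by linarith)]
        have := h4.trans (DR.vert h h3 (htop xlo le_rfl hx)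
          (by rw [abs_le]; constructor <;> linarith))
        rw [← ENNReal.ofReal_add (by linarith) (by positivity),
          abs_of_nonneg (by linarith)] at this
        convert this using 2
        ring
      · rw [max_eq_right c']
        have := DR.vert h (hGF hw) (htop w.1 c' c) (by rw [abs_le]; constructor <;> linarith)
        rw [abs_of_nonneg (by linarith)] at this
        simpa using this
  rw [abs_of_nonpos (by linarith)]
  rcases lt_or_ge xhi p.1 with c | c
  · obtain ⟨y', h1, h2, h3, h4⟩ := cR hq hqy c.le hpq
    have := (DR.vert h (hGF hp) h3 (by rw [abs_le]; constructor <;> linarith)).trans h4.symm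
    rw [← ENNReal.ofReal_add (by positivity) (by linarith)] at this
    refine this.mono (ENNReal.ofReal_le_ofReal ?_)
    have : |p.2 - y'| ≤ p.2 - yhi + (y' - yhi) := by rw [abs_le]; constructor <;> linarith
    linarith
  rcases lt_or_ge q.1 xlo with c' | c'
  · obtain ⟨y', h1, h2, h3, h4⟩ := cL hp hpy c'.le hpq
    have := (DR.vert h (hGF hq) h3 (by rw [abs_le]; constructor <;> linarith)).trans h4.symm
    rw [← ENNReal.ofReal_add (by positivity) (by linarith)] at this
    refine this.symm.mono (ENNReal.ofReal_le_ofReal ?_)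
    have : |q.2 - y'| ≤ q.2 - yhi + (y' - yhi) := by rw [abs_le]; constructor <;> linarith
    linarith
  have f1 := foot p hp hpy
  have f2 := (foot q hq hqy).symm
  rw [min_eq_left c] at f1
  rw [max_eq_right (le_min c' hx)] at f2
  have i1 : max xlo p.1 ≤ min q.1 xhi := max_le (le_min c' hx) (le_min hpq c)
  have fm : DR F (max xlo p.1, yhi) (min q.1 xhi, yhi)
      (ENNReal.ofReal (min q.1 xhi - max xlo p.1)) := by
    have := DR.of_box (F := F) (u := (max xlo p.1, yhi)) (v := (min q.1 xhi, yhi)) (by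
      rintro ⟨a, b⟩ ha hb
      simp only [uIcc_self, mem_singleton_iff] at hb
      subst hb
      rw [uIcc_of_le i1] at ha
      exact htop a ((le_max_left _ _).trans ha.1) (ha.2.trans (min_le_right _ _)))
    simp only [sub_self, abs_zero, add_zero] at this
    rwa [abs_of_nonpos (by linarith), neg_sub] at this
  rw [abs_of_nonpos (by linarith [le_max_right xlo p.1])] at f1
  rw [abs_of_nonneg (by linarith [min_le_left q.1 xhi])] at f2
  have := (f1.trans fm).trans f2
  rw [← ENNReal.ofReal_add (by linarith [le_max_right xlo p.1]) (by linarith),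
    ← ENNReal.ofReal_add (by linarith [le_max_right xlo p.1])
      (by linarith [min_le_left q.1 xhi])] at this
  convert this using 2
  ring

lemma var_ge (g : ℝ → ℝ × ℝ) {a b : ℝ} (hab : a ≤ b) :
    ENNReal.ofReal (|(g a).1 - (g b).1| + |(g a).2 - (g b).2|) ≤ l1VarOn g (Icc a b) := by
  rw [← edist_l1]
  exact eVariationOn.edist_le (fun t => (WithLp.equiv 1 (ℝ × ℝ)).symm (g t))
    (left_mem_Icc.2 hab) (right_mem_Icc.2 hab)

lemma var_add (g : ℝ → ℝ × ℝ) {a b c : ℝ} (hab : a ≤ b) (hbc : b ≤ c) :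
    l1VarOn g (Icc a c) = l1VarOn g (Icc a b) + l1VarOn g (Icc b c) := by
  have := eVariationOn.Icc_add_Icc (fun t => (WithLp.equiv 1 (ℝ × ℝ)).symm (g t))
    (s := univ) hab hbc (mem_univ _)
  simp only [univ_inter] at this
  exact this.symm

lemma xmono_of_short {F : Set (ℝ × ℝ)} (h : Nice F) {p q : ℝ × ℝ} {g : ℝ → ℝ × ℝ}
    (hg : IsShortestPathIn F p q g)
    (hD : DR F p q (ENNReal.ofReal (|p.1 - q.1| + 2 - |p.2 - q.2|))) : XMonotone g := by
  obtain ⟨⟨hc, h0, h1, hF⟩, hs⟩ := hg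
  by_contra hmon
  unfold XMonotone at hmon
  rw [not_or] at hmon
  have hfc : ContinuousOn (fun t => (g t).1) (Icc 0 1) := by fun_prop
  -- an excursion
  obtain ⟨t1, t2, t3, ht1, h12, h23, ht3, he, hne⟩ : ∃ t1 t2 t3 : ℝ, 0 ≤ t1 ∧ t1 ≤ t2 ∧ t2 ≤ t3 ∧
      t3 ≤ 1 ∧ (g t1).1 = (g t3).1 ∧ (g t2).1 ≠ (g t1).1 := by
    obtain ⟨a, ha, b, hb, c, hcc, hab, hbc, hh⟩ := not_monotoneOn_not_antitoneOn_iff_exists_lt_lt.1 hmon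
    have cab : ContinuousOn (fun t => (g t).1) (Icc a b) := hfc.mono (Icc_subset_Icc ha.1 hb.2)
    have cbc : ContinuousOn (fun t => (g t).1) (Icc b c) := hfc.mono (Icc_subset_Icc hb.1 hcc.2)
    rcases hh with ⟨i1, i2⟩ | ⟨i1, i2⟩
    · rcases le_total (g a).1 (g c).1 with i3 | i3
      · obtain ⟨t, ht, hte⟩ := intermediate_value_Icc hab.le cab ⟨i3, i2.le⟩
        exact ⟨t, b, c, ha.1.trans ht.1, ht.2, hbc.le, hcc.2, hte, by
          simp only at hte; rw [hte]; exact i2.ne'⟩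
      · obtain ⟨t, ht, hte⟩ := intermediate_value_Icc' hbc.le cbc ⟨i3, i1.le⟩
        exact ⟨a, b, t, ha.1, hab.le, ht.1, ht.2.trans hcc.2, hte.symm, i1.ne'⟩
    · rcases le_total (g a).1 (g c).1 with i3 | i3
      · obtain ⟨t, ht, hte⟩ := intermediate_value_Icc hbc.le cbc ⟨i1.le, i3⟩
        exact ⟨a, b, t, ha.1, hab.le, ht.1, ht.2.trans hcc.2, hte.symm, i1.ne⟩
      · obtain ⟨t, ht, hte⟩ := intermediate_value_Icc' hab.le cab ⟨i2.le, i3⟩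
        exact ⟨t, b, c, ha.1.trans ht.1, ht.2, hbc.le, hcc.2, hte, by
          simp only at hte; rw [hte]; exact i2.ne⟩
  have hlen : pathLen g ≤ ENNReal.ofReal (|p.1 - q.1| + 2 - |p.2 - q.2|) := by
    obtain ⟨γ, hγ1, hγ2⟩ := hD
    exact (hs γ hγ1).trans hγ2
  have hx : 0 < |(g t2).1 - (g t1).1| := abs_pos.2 (sub_ne_zero.2 hne)
  have hsplit : pathLen g = l1VarOn g (Icc 0 t1) + l1VarOn g (Icc t1 t3) + l1VarOn g (Icc t3 1) := by
    unfold pathLen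
    rw [var_add g (b := t3) (by linarith) ht3, var_add g (b := t1) (c := t3) ht1 (by linarith)]
  have hmid : ENNReal.ofReal (2 * |(g t2).1 - (g t1).1| + |(g t1).2 - (g t3).2|)
      ≤ l1VarOn g (Icc t1 t3) := by
    rw [var_add g h12 h23]
    refine le_trans ?_ (add_le_add (var_ge g h12) (var_ge g h23))
    rw [← ENNReal.ofReal_add (by positivity) (by positivity)]
    apply ENNReal.ofReal_le_ofReal
    rw [← he, abs_sub_comm (g t1).1 (g t2).1]
    have := abs_sub_le (g t1).2 (g t2).2 (g t3).2
    linarith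
  by_cases hch : ∀ y ∈ uIcc (g t1).2 (g t3).2, ((g t1).1, y) ∈ F
  · -- the chord is free: shortcut
    have d2 : DR F (g t1) (g t3) (ENNReal.ofReal (|(g t1).1 - (g t3).1| + |(g t1).2 - (g t3).2|)) :=
      DR.of_box (by
        rintro ⟨a, b⟩ ha hb
        rw [← he] at ha
        simp only [uIcc_self, mem_singleton_iff] at ha
        subst ha
        exact hch b hb)
    rw [he, sub_self, abs_zero, zero_add] at d2
    have d1 := DR.of_sub hc hF le_rfl ht1 (by linarith : t1 ≤ 1)
    have d3 := DR.of_sub hc hF (by linarith : 0 ≤ t3) ht3 le_rfl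
    rw [h0] at d1
    rw [h1] at d3
    obtain ⟨γ, hγ1, hγ2⟩ := (d1.trans d2).trans d3
    have hle := (hs γ hγ1).trans hγ2
    have hfin : pathLen g ≠ ∞ := ne_top_of_le_ne_top ENNReal.ofReal_ne_top hlen
    rw [hsplit] at hle hfin
    have n1 : l1VarOn g (Icc 0 t1) ≠ ∞ := by
      intro hh; rw [hh] at hfin; simp at hfin
    have n3 : l1VarOn g (Icc t3 1) ≠ ∞ := by
      intro hh; rw [hh] at hfin; simp at hfin
    rw [ENNReal.add_le_add_iff_right n3, ENNReal.add_le_add_iff_left n1] at hle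
    have := (ENNReal.ofReal_le_ofReal_iff (abs_nonneg _)).1 (hmid.trans hle)
    linarith
  · push Not at hch
    obtain ⟨y, hy, hyF⟩ := hch
    obtain ⟨a, b, c, d, k1, k2, k3, k4, k5, k6, k7⟩ := h.sq _ _ hyF
    have hu : (g t1).2 ≤ c ∨ d ≤ (g t1).2 := by
      by_contra! hh
      exact k7 _ _ k1 k2 hh.1 hh.2 (hF t1 ⟨ht1, by linarith⟩)
    have hv : (g t3).2 ≤ c ∨ d ≤ (g t3).2 := by
      by_contra! hh
      refine k7 _ _ k1 k2 hh.1 hh.2 ?_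
      rw [he]; exact hF t3 ⟨by linarith, ht3⟩
    have hbig : 1 < |(g t1).2 - (g t3).2| := by
      rw [lt_abs]
      rw [mem_uIcc] at hy
      rcases hu with hu | hu <;> rcases hv with hv | hv <;> rcases hy with hy | hy
      all_goals first
        | (exfalso; linarith [hy.1, hy.2])
        | (left; linarith)
        | (right; linarith)
    have low := add_le_add (add_le_add (var_ge g ht1) hmid) (var_ge g ht3)
    rw [← hsplit, ← ENNReal.ofReal_add (by positivity) (by positivity),
      ← ENNReal.ofReal_add (by positivity) (by positivity), h0, h1] at low
    have hfin := low.trans hlen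
    rw [ENNReal.ofReal_le_ofReal_iff'] at hfin
    have e1 := abs_sub_le p.1 (g t1).1 q.1
    have e2 : |(g t1).2 - (g t3).2| ≤ |p.2 - (g t1).2| + |p.2 - q.2| + |(g t3).2 - q.2| := by
      have a1 := abs_sub_le (g t1).2 p.2 (g t3).2
      have a2 := abs_sub_le p.2 q.2 (g t3).2
      rw [abs_sub_comm (g t1).2 p.2] at a1
      rw [abs_sub_comm q.2] at a2
      linarith
    rw [← he] at hfin
    have p1 := abs_nonneg (p.1 - (g t1).1)
    have p2 := abs_nonneg (p.2 - (g t1).2)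
    have p3 := abs_nonneg ((g t1).1 - q.1)
    have p4 := abs_nonneg ((g t3).2 - q.2)
    rcases hfin with hfin | hfin <;> linarith

/-- Open boxes: pairs of open, order-connected sets of reals. -/
def OpenBox (t : Set ℝ × Set ℝ) : Prop :=
  IsOpen t.1 ∧ IsOpen t.2 ∧ t.1.OrdConnected ∧ t.2.OrdConnected

/-- `S` is a finite union of open boxes. -/
def BoxUnion (S : Set (ℝ × ℝ)) : Prop :=
  ∃ T : Set (Set ℝ × Set ℝ), T.Finite ∧ (∀ t ∈ T, OpenBox t) ∧
    ∀ z, z ∈ S ↔ ∃ t ∈ T, z.1 ∈ t.1 ∧ z.2 ∈ t.2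

lemma BoxUnion.univ : BoxUnion Set.univ :=
  ⟨{(Set.univ, Set.univ)}, Set.finite_singleton _,
    by rintro t rfl; exact ⟨isOpen_univ, isOpen_univ, ordConnected_univ, ordConnected_univ⟩,
    by simp⟩

lemma BoxUnion.inter {S S' : Set (ℝ × ℝ)} (h : BoxUnion S) (h' : BoxUnion S') :
    BoxUnion (S ∩ S') := by
  obtain ⟨T, hf, hb, hz⟩ := h
  obtain ⟨T', hf', hb', hz'⟩ := h'
  refine ⟨Set.image2 (fun t t' => (t.1 ∩ t'.1, t.2 ∩ t'.2)) T T', hf.image2 _ hf', ?_, ?_⟩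
  · rintro _ ⟨t, ht, t', ht', rfl⟩
    obtain ⟨a, b, c, d⟩ := hb t ht
    obtain ⟨a', b', c', d'⟩ := hb' t' ht'
    exact ⟨a.inter a', b.inter b', c.inter c', d.inter d'⟩
  · intro z
    rw [Set.mem_inter_iff, hz, hz']
    constructor
    · rintro ⟨⟨t, ht, h1, h2⟩, t', ht', h3, h4⟩
      exact ⟨_, ⟨t, ht, t', ht', rfl⟩, ⟨h1, h3⟩, ⟨h2, h4⟩⟩
    · rintro ⟨_, ⟨t, ht, t', ht', rfl⟩, ⟨h1, h3⟩, ⟨h2, h4⟩⟩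
      exact ⟨⟨t, ht, h1, h2⟩, t', ht', h3, h4⟩

lemma BoxUnion.rect {S : Set (ℝ × ℝ)} (h : IsClosedAxisRect S) : BoxUnion Sᶜ := by
  obtain ⟨a, b, c, d, _, _, rfl⟩ := h
  refine ⟨{(Iio a, Set.univ), (Ioi b, Set.univ), (Set.univ, Iio c), (Set.univ, Ioi d)},
    by simp, ?_, ?_⟩
  · rintro t (rfl | rfl | rfl | rfl)
    · exact ⟨isOpen_Iio, isOpen_univ, ordConnected_Iio, ordConnected_univ⟩
    · exact ⟨isOpen_Ioi, isOpen_univ, ordConnected_Ioi, ordConnected_univ⟩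
    · exact ⟨isOpen_univ, isOpen_Iio, ordConnected_univ, ordConnected_Iio⟩
    · exact ⟨isOpen_univ, isOpen_Ioi, ordConnected_univ, ordConnected_Ioi⟩
  · intro z
    simp only [mem_compl_iff, mem_prod, mem_Icc, mem_insert_iff, mem_singleton_iff,
      exists_eq_or_imp, exists_eq_left, mem_Iio, mem_Ioi, Set.mem_univ, and_true, true_and]
    grind

lemma BoxUnion.env {W : Set (ℝ × ℝ)} (hW : IsRectilinearEnv W) : BoxUnion Wᶜ := by
  classical
  obtain ⟨𝓡, hR, hWR⟩ := hW.2.2.1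
  rw [hWR]
  clear hWR hW
  induction 𝓡 using Finset.induction_on with
  | empty => simpa using BoxUnion.univ
  | insert S s hs ih =>
    have h1 := BoxUnion.rect (hR S (Finset.mem_insert_self _ _))
    have h2 := ih (fun S' h' => hR S' (Finset.mem_insert_of_mem h'))
    rw [Finset.set_biUnion_insert, Set.compl_union]
    exact h1.inter h2

/-- The closed `1/2`-thickening of a set of reals. -/
def thick (I : Set ℝ) : Set ℝ := {x | ∃ e, |e| ≤ 1 / 2 ∧ x + e ∈ I}

lemma thick_nbhd {I : Set ℝ} (hI : IsOpen I) {x : ℝ} (hx : x ∈ thick I) :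
    ∃ a b, a < x ∧ x < b ∧ a + 1 < b ∧ ∀ x', a < x' → x' < b → x' ∈ thick I := by
  obtain ⟨e, he, hxe⟩ := hx
  obtain ⟨ε, hε, hb⟩ := Metric.isOpen_iff.1 hI _ hxe
  rw [abs_le] at he
  refine ⟨x + e - ε - 1 / 2, x + e + ε + 1 / 2, by linarith, by linarith, by linarith, ?_⟩
  intro x' h1 h2
  rcases lt_or_ge x' (x + e) with h | h
  · rcases le_or_gt (x + e - 1 / 2) x' with h' | h'
    · exact ⟨x + e - x', by rw [abs_le]; constructor <;> linarith, by simpa using hxe⟩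
    · refine ⟨1 / 2, by norm_num, hb ?_⟩
      rw [Metric.mem_ball, Real.dist_eq, abs_lt]; constructor <;> linarith
  · rcases le_or_gt x' (x + e + 1 / 2) with h' | h'
    · exact ⟨x + e - x', by rw [abs_le]; constructor <;> linarith, by simpa using hxe⟩
    · refine ⟨-(1 / 2), by norm_num, hb ?_⟩
      rw [Metric.mem_ball, Real.dist_eq, abs_lt]; constructor <;> linarith

lemma thick_open {I : Set ℝ} (hI : IsOpen I) : IsOpen (thick I) := by
  rw [isOpen_iff_mem_nhds]
  intro x hx
  obtain ⟨a, b, h1, h2, _, h3⟩ := thick_nbhd hI hx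
  exact Filter.mem_of_superset (Ioo_mem_nhds h1 h2) (fun y hy => h3 y hy.1 hy.2)

lemma thick_ord {I : Set ℝ} (hI : I.OrdConnected) : (thick I).OrdConnected := by
  refine ⟨?_⟩
  rintro x ⟨e, he, hxe⟩ y ⟨e', he', hye⟩ z ⟨h1, h2⟩
  rw [abs_le] at he he'
  have hm : max (x + e) (z - 1 / 2) ∈ I := by
    rcases le_total (x + e) (z - 1 / 2) with h | h
    · rw [max_eq_right h]
      exact hI.out hxe hye ⟨h, by linarith⟩
    · rwa [max_eq_left h]
  refine ⟨max (x + e) (z - 1 / 2) - z, ?_, by simpa using hm⟩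
  rw [abs_le]
  constructor
  · linarith [le_max_right (x + e) (z - 1 / 2)]
  · have : max (x + e) (z - 1 / 2) ≤ z + 1 / 2 := max_le (by linarith) (by linarith)
    linarith

/-- The boxes of the complement of the free space. -/
lemma free_boxes {W : Set (ℝ × ℝ)} (hW : IsRectilinearEnv W) :
    BoxUnion (freeSpace W)ᶜ ∧ SqProp (freeSpace W) := by
  obtain ⟨T, hf, hb, hz⟩ := BoxUnion.env hW
  have key : ∀ z, z ∈ (freeSpace W)ᶜ ↔ ∃ t ∈ T, z.1 ∈ thick t.1 ∧ z.2 ∈ thick t.2 := by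
    intro z
    constructor
    · intro h
      simp only [freeSpace, mem_compl_iff, mem_ofPred_eq, not_forall] at h
      obtain ⟨q, hq, hzq⟩ := h
      obtain ⟨t, ht, h1, h2⟩ := (hz _).1 hzq
      exact ⟨t, ht, ⟨q.1, (le_max_left _ _).trans hq, h1⟩, ⟨q.2, (le_max_right _ _).trans hq, h2⟩⟩
    · rintro ⟨t, ht, ⟨e, he, h1⟩, ⟨e', he', h2⟩⟩ h
      exact (hz (z + (e, e'))).2 ⟨t, ht, h1, h2⟩ (h (e, e') (max_le he he'))
  constructor
  · refine ⟨(fun t => (thick t.1, thick t.2)) '' T, hf.image _, ?_, ?_⟩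
    · rintro _ ⟨t, ht, rfl⟩
      obtain ⟨a, b, c, d⟩ := hb t ht
      exact ⟨thick_open a, thick_open b, thick_ord c, thick_ord d⟩
    · intro z
      rw [key]
      simp
  · intro x y hxy
    obtain ⟨t, ht, h1, h2⟩ := (key (x, y)).1 hxy
    obtain ⟨a, b, i1, i2, i3, i4⟩ := thick_nbhd (hb t ht).1 h1
    obtain ⟨c, d, j1, j2, j3, j4⟩ := thick_nbhd (hb t ht).2.1 h2
    refine ⟨a, b, c, d, i1, i2, j1, j2, i3, j3, fun x' y' k1 k2 k3 k4 => ?_⟩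
    exact (key (x', y')).2 ⟨t, ht, i4 x' k1 k2, j4 y' k3 k4⟩

lemma ord_local {I : Set ℝ} (hI : I.OrdConnected) {x : ℝ} (hx : x ∉ I) :
    ∃ δ > 0, ∀ x', |x' - x| < δ → x' ∉ I → ∀ v ∈ uIcc x x', v ∉ I := by
  rcases I.eq_empty_or_nonempty with rfl | ⟨i, hi⟩
  · exact ⟨1, one_pos, by simp⟩
  · have hne : i ≠ x := fun h => hx (h ▸ hi)
    refine ⟨|i - x|, abs_pos.2 (sub_ne_zero.2 hne), fun x' h1 h2 v hv hvI => ?_⟩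
    rw [mem_uIcc] at hv
    rcases lt_or_gt_of_ne hne with h | h
    · rw [abs_of_neg (by linarith : i - x < 0), abs_lt] at h1
      rcases hv with hv | hv
      · exact hx (hI.out hi hvI ⟨h.le, hv.1⟩)
      · exact h2 (hI.out hi hvI ⟨by linarith, hv.1⟩)
    · rw [abs_of_pos (by linarith : 0 < i - x), abs_lt] at h1
      rcases hv with hv | hv
      · exact h2 (hI.out hvI hi ⟨hv.2, by linarith⟩)
      · exact hx (hI.out hvI hi ⟨hv.2, by linarith⟩)

lemma box_local {t : Set ℝ × Set ℝ} (ht : OpenBox t) {z : ℝ × ℝ}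
    (hz : ¬ (z.1 ∈ t.1 ∧ z.2 ∈ t.2)) :
    ∃ δ > 0, ∀ w : ℝ × ℝ, ¬ (w.1 ∈ t.1 ∧ w.2 ∈ t.2) → |w.1 - z.1| < δ → |w.2 - z.2| < δ →
      ∀ v : ℝ × ℝ, v.1 ∈ uIcc z.1 w.1 → v.2 ∈ uIcc z.2 w.2 → ¬ (v.1 ∈ t.1 ∧ v.2 ∈ t.2) := by
  obtain ⟨o1, o2, c1, c2⟩ := ht
  by_cases h1 : z.1 ∈ t.1
  · have h2 : z.2 ∉ t.2 := fun h => hz ⟨h1, h⟩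
    obtain ⟨δ, hδ, h⟩ := ord_local c2 h2
    obtain ⟨ε, hε, hb⟩ := Metric.isOpen_iff.1 o1 _ h1
    refine ⟨min δ ε, lt_min hδ hε, fun w hw k1 k2 v v1 v2 hv => ?_⟩
    have hw1 : w.1 ∈ t.1 := hb (by
      rw [Metric.mem_ball, Real.dist_eq]; exact k1.trans_le (min_le_right _ _))
    exact h w.2 (k2.trans_le (min_le_left _ _)) (fun i => hw ⟨hw1, i⟩) v.2 v2 hv.2
  · obtain ⟨δ, hδ, h⟩ := ord_local c1 h1
    by_cases h2 : z.2 ∈ t.2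
    · obtain ⟨ε, hε, hb⟩ := Metric.isOpen_iff.1 o2 _ h2
      refine ⟨min δ ε, lt_min hδ hε, fun w hw k1 k2 v v1 v2 hv => ?_⟩
      have hw1 : w.2 ∈ t.2 := hb (by
        rw [Metric.mem_ball, Real.dist_eq]; exact k2.trans_le (min_le_right _ _))
      exact h w.1 (k1.trans_le (min_le_left _ _)) (fun i => hw ⟨i, hw1⟩) v.1 v1 hv.1
    · obtain ⟨ε, hε, h'⟩ := ord_local c2 h2
      refine ⟨min δ ε, lt_min hδ hε, fun w hw k1 k2 v v1 v2 hv => ?_⟩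
      by_cases hw1 : w.1 ∈ t.1
      · exact h' w.2 (k2.trans_le (min_le_right _ _)) (fun i => hw ⟨hw1, i⟩) v.2 v2 hv.2
      · exact h w.1 (k1.trans_le (min_le_left _ _)) hw1 v.1 v1 hv.1

lemma BoxUnion.lb {F : Set (ℝ × ℝ)} (h : BoxUnion Fᶜ) : LB F := by
  obtain ⟨T, hf, hb, hz⟩ := h
  have hz' : ∀ z, z ∈ F ↔ ∀ t ∈ T, ¬ (z.1 ∈ t.1 ∧ z.2 ∈ t.2) := by
    intro z
    have := hz z
    rw [mem_compl_iff] at this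
    rw [← not_iff_not, this]; push Not; rfl
  intro z hzF
  have hzF' := (hz' z).1 hzF
  suffices H : ∃ δ > 0, ∀ t ∈ T, ∀ w : ℝ × ℝ, ¬ (w.1 ∈ t.1 ∧ w.2 ∈ t.2) → |w.1 - z.1| < δ →
      |w.2 - z.2| < δ → ∀ v : ℝ × ℝ, v.1 ∈ uIcc z.1 w.1 → v.2 ∈ uIcc z.2 w.2 →
      ¬ (v.1 ∈ t.1 ∧ v.2 ∈ t.2) by
    obtain ⟨δ, hδ, H⟩ := H
    refine ⟨δ, hδ, fun w hw h1 h2 v v1 v2 => (hz' v).2 fun t ht => ?_⟩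
    exact H t ht w ((hz' w).1 hw t ht) h1 h2 v v1 v2
  clear hz hz'
  induction T, hf using Set.Finite.induction_on with
  | empty => exact ⟨1, one_pos, by simp⟩
  | @insert t T _ _ ih =>
    obtain ⟨δ, hδ, H⟩ := ih (fun t' ht' => hb t' (Or.inr ht')) (fun t' ht' => hzF' t' (Or.inr ht'))
    obtain ⟨ε, hε, H'⟩ := box_local (hb t (Or.inl rfl)) (hzF' t (Or.inl rfl))
    refine ⟨min δ ε, lt_min hδ hε, ?_⟩
    rintro t' (rfl | ht') w hw k1 k2
    · exact H' w hw (k1.trans_le (min_le_right _ _)) (k2.trans_le (min_le_right _ _))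
    · exact H t' ht' w hw (k1.trans_le (min_le_left _ _)) (k2.trans_le (min_le_left _ _))

lemma BoxUnion.isOpen {S : Set (ℝ × ℝ)} (h : BoxUnion S) : IsOpen S := by
  obtain ⟨T, hf, hb, hz⟩ := h
  have : S = ⋃ t ∈ T, t.1 ×ˢ t.2 := by
    ext z; rw [hz]; simp only [mem_iUnion, mem_prod, exists_prop]
  rw [this]
  exact isOpen_biUnion fun t ht => (hb t ht).1.prod (hb t ht).2.1

lemma nice_free {W : Set (ℝ × ℝ)} (hW : IsRectilinearEnv W) : Nice (freeSpace W) where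
  closed := ⟨(free_boxes hW).1.isOpen⟩
  sq := (free_boxes hW).2
  lb := (free_boxes hW).1.lb

lemma bdry_finite {I : Set ℝ} (hI : I.OrdConnected) : (closure I \ I).Finite := by
  rcases I.eq_empty_or_nonempty with rfl | ⟨i, hi⟩
  · simp
  have h1 : (({x | IsLUB I x}) : Set ℝ).Subsingleton := fun x hx y hy => hx.unique hy
  have h2 : (({x | IsGLB I x}) : Set ℝ).Subsingleton := fun x hx y hy => hx.unique hy
  refine (h1.finite.union h2.finite).subset ?_
  rintro x ⟨hx, hxI⟩
  rcases lt_trichotomy i x with h | h | h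
  · left
    refine isLUB_of_mem_closure (fun y hy => ?_) hx
    by_contra hc
    exact hxI (hI.out hi hy ⟨h.le, (not_le.1 hc).le⟩)
  · exact absurd (h ▸ hi) hxI
  · right
    refine isGLB_of_mem_closure (fun y hy => ?_) hx
    by_contra hc
    exact hxI (hI.out hy hi ⟨(not_le.1 hc).le, h.le⟩)

lemma BoxUnion.horiz_finite {F : Set (ℝ × ℝ)} (h : BoxUnion Fᶜ) :
    {y | IsHorizEdgeY F y}.Finite := by
  have hop := h.isOpen
  obtain ⟨T, hf, hb, hz⟩ := h
  have hA : (⋃ t ∈ T, (closure t.1 \ t.1)).Finite :=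
    hf.biUnion fun t ht => bdry_finite (hb t ht).2.2.1
  have hB : (⋃ t ∈ T, (closure t.2 \ t.2)).Finite :=
    hf.biUnion fun t ht => bdry_finite (hb t ht).2.2.2
  refine hB.subset ?_
  rintro y ⟨a, b, hab, hsub⟩
  obtain ⟨x, hx, hxA⟩ := (Icc_infinite hab).exists_notMem_finite hA
  have hfr := hsub (mk_mem_prod hx (mem_singleton y))
  rw [← frontier_compl, frontier_eq_closure_inter_closure, compl_compl] at hfr
  have hUn : Fᶜ = ⋃ t ∈ T, t.1 ×ˢ t.2 := by
    ext z; rw [hz]; simp only [mem_iUnion, mem_prod, exists_prop]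
  have hnot : (x, y) ∉ Fᶜ := by
    have := hop.isClosed_compl
    rw [compl_compl] at this
    rw [this.closure_eq] at hfr
    exact fun hc => hc hfr.2
  have hcl := hfr.1
  rw [hUn, hf.closure_biUnion] at hcl
  simp only [mem_iUnion] at hcl
  obtain ⟨t, ht, hm⟩ := hcl
  rw [closure_prod_eq] at hm
  simp only [mem_iUnion, not_exists] at hxA
  have h1 : x ∈ t.1 := by
    by_contra hc
    exact hxA t ht ⟨hm.1, hc⟩
  simp only [mem_iUnion]
  exact ⟨t, ht, hm.2, fun hc => hnot ((hz _).2 ⟨t, ht, h1, hc⟩)⟩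

lemma heights_finite {F P : Set (ℝ × ℝ)} (h : {y | IsHorizEdgeY F y}.Finite) (hP : P.Finite) :
    {y | IsHorizLineY F P 1 y}.Finite := by
  have hS : ({y | IsHorizEdgeY F y} ∪ Prod.snd '' P).Finite := h.union (hP.image _)
  have hS' : (⋃ y ∈ ({y | IsHorizEdgeY F y} ∪ Prod.snd '' P), ({y, y + 1, y - 1} : Set ℝ)).Finite :=
    hS.biUnion fun y _ => by simp
  refine hS'.subset ?_
  rintro y ⟨i, hi, hy⟩
  have key : ∀ y₀ : ℝ, |y - y₀| = (i : ℝ) → y ∈ ({y₀, y₀ + 1, y₀ - 1} : Set ℝ) := by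
    intro y₀ h0
    simp only [mem_insert_iff, mem_singleton_iff]
    interval_cases i
    · left
      simp only [Nat.cast_zero, abs_eq_zero] at h0; linarith
    · right
      rcases (abs_eq (by norm_num)).1 h0 with h' | h'
      · left; push_cast at h'; linarith
      · right; push_cast at h'; linarith
  simp only [mem_iUnion]
  rcases hy with ⟨y₀, h1, h2⟩ | ⟨p, hp, h2⟩
  · exact ⟨y₀, Or.inl h1, key _ h2⟩
  · exact ⟨p.2, Or.inr ⟨p, hp, rfl⟩, key _ h2⟩

lemma comp_absorb {S U : Set (ℝ × ℝ)} {c u v : ℝ × ℝ} (hu : u ∈ connectedComponentIn S c)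
    (hU : IsPreconnected U) (hUS : U ⊆ S) (huU : u ∈ U) (hv : v ∈ U) :
    v ∈ connectedComponentIn S c := by
  rw [connectedComponentIn_eq hu]
  exact hU.subset_connectedComponentIn huU hUS hv

section
variable {F P : Set (ℝ × ℝ)} {c : ℝ × ℝ} {xlo xhi ylo yhi : ℝ}

lemma corridor_row
    (hR : Icc xlo xhi ×ˢ Icc ylo yhi = closure (connectedComponentIn (F \ primaryHorizSet F P) c))
    (hx : xlo ≤ xhi) {y : ℝ} (h1 : ylo < y) (h2 : y < yhi) :
    ∃ x', (x', y) ∈ connectedComponentIn (F \ primaryHorizSet F P) c := by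
  set C := connectedComponentIn (F \ primaryHorizSet F P) c with hC
  have hpre : IsPreconnected C := isPreconnected_connectedComponentIn
  have hord := (hpre.image Prod.snd continuous_snd.continuousOn).ordConnected
  have m1 : (xlo, ylo) ∈ closure C := by
    rw [← hR]; exact ⟨⟨le_rfl, hx⟩, ⟨le_rfl, by simp only; linarith⟩⟩
  have m2 : (xlo, yhi) ∈ closure C := by
    rw [← hR]; exact ⟨⟨le_rfl, hx⟩, ⟨by simp only; linarith, le_rfl⟩⟩
  obtain ⟨u, hu1, hu2⟩ := mem_closure_iff.1 m1 {z | z.2 < y}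
    (isOpen_lt continuous_snd continuous_const) h1
  obtain ⟨v, hv1, hv2⟩ := mem_closure_iff.1 m2 {z | y < z.2}
    (isOpen_lt continuous_const continuous_snd) h2
  obtain ⟨⟨a, b⟩, hw, hwy⟩ := hord.out ⟨u, hu2, rfl⟩ ⟨v, hv2, rfl⟩ ⟨le_of_lt hu1, le_of_lt hv1⟩
  simp only at hwy
  subst hwy
  exact ⟨a, hw⟩

lemma corridor_block (h : Nice F)
    (hR : Icc xlo xhi ×ˢ Icc ylo yhi = closure (connectedComponentIn (F \ primaryHorizSet F P) c))
    (hx : xlo ≤ xhi) {x y : ℝ} (h1 : ylo < y) (h2 : y < yhi) (hxF : (x, y) ∈ F)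
    (hx1 : xlo - 1 ≤ x) (hx2 : x ≤ xhi + 1) : xlo ≤ x ∧ x ≤ xhi := by
  obtain ⟨x', hx'⟩ := corridor_row hR hx h1 h2
  set C := connectedComponentIn (F \ primaryHorizSet F P) c with hC
  have hCS : C ⊆ F \ primaryHorizSet F P := connectedComponentIn_subset _ _
  have hRF : Icc xlo xhi ×ˢ Icc ylo yhi ⊆ F := by
    rw [hR]
    exact closure_minimal (fun z hz => (hCS hz).1) h.closed
  have hrow : ∀ t, xlo ≤ t → t ≤ xhi → (t, y) ∈ F := fun t a b => hRF ⟨⟨a, b⟩, ⟨h1.le, h2.le⟩⟩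
  have hx'R : (x', y) ∈ Icc xlo xhi ×ˢ Icc ylo yhi := by rw [hR]; exact subset_closure hx'
  have hmin : ∀ t, min xlo x ≤ t → t ≤ max xhi x → (t, y) ∈ F := by
    intro t a b
    rcases lt_or_ge t xlo with h3 | h3
    · have : x ≤ t := by
        rcases min_le_iff.1 a with h4 | h4
        · linarith
        · exact h4
      exact h.horiz hxF (hrow xlo le_rfl hx) (by linarith) this h3.le
    · rcases le_or_gt t xhi with h4 | h4
      · exact hrow t h3 h4
      · have : t ≤ x := by
          rcases le_max_iff.1 b with h5 | h5
          · linarith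
          · exact h5
        exact h.horiz (hrow xhi hx le_rfl) hxF (by linarith) h4.le this
  have hmem : (x, y) ∈ C := by
    refine comp_absorb (U := (fun t : ℝ => (t, y)) '' Icc (min xlo x) (max xhi x)) hx'
      (isPreconnected_Icc.image _ (by fun_prop)) ?_ ?_ ?_
    · rintro _ ⟨t, ht, rfl⟩
      exact ⟨hmin t ht.1 ht.2, (hCS hx').2⟩
    · exact ⟨x', ⟨(min_le_left _ _).trans hx'R.1.1, hx'R.1.2.trans (le_max_left _ _)⟩, rfl⟩
    · exact ⟨x, ⟨min_le_right _ _, le_max_right _ _⟩, rfl⟩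
  have : (x, y) ∈ Icc xlo xhi ×ˢ Icc ylo yhi := by rw [hR]; exact subset_closure hmem
  exact this.1

lemma corridor_pos (h : Nice F) (hfin : {y | IsHorizLineY F P 1 y}.Finite)
    (hc : c ∈ F \ primaryHorizSet F P)
    (hR : Icc xlo xhi ×ˢ Icc ylo yhi = closure (connectedComponentIn (F \ primaryHorizSet F P) c))
    {G : Set (ℝ × ℝ)} (hG : IsPreconnected G) (hGF : G ⊆ F) (hcG : c ∈ G) {p : ℝ × ℝ}
    (hp : p ∈ G) (hpc : p ≠ c) : ylo < yhi := by
  have hcC : c ∈ connectedComponentIn (F \ primaryHorizSet F P) c := mem_connectedComponentIn hc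
  set C := connectedComponentIn (F \ primaryHorizSet F P) c with hC
  have hCR : C ⊆ Icc xlo xhi ×ˢ Icc ylo yhi := by rw [hR]; exact subset_closure
  by_contra hlt
  have hflat : ∀ w ∈ C, w.2 = c.2 := by
    intro w hw
    have a := (hCR hw).2
    have b := (hCR hcC).2
    exact le_antisymm (by linarith [a.2, b.1]) (by linarith [a.1, b.2])
  have hnp : c.2 ∈ {y | IsHorizLineY F P 1 y}ᶜ := fun hh => hc.2 hh
  obtain ⟨ε, hε, hball⟩ := Metric.isOpen_iff.1 hfin.isClosed.isOpen_compl _ hnp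
  obtain ⟨δ, hδ, hlb⟩ := h.lb c hc.1
  have hm : 0 < min δ ε := lt_min hδ hε
  have key : ∀ w ∈ F, |w.1 - c.1| < min δ ε → |w.2 - c.2| < min δ ε → w ∈ C := by
    intro w hw h1 h2
    refine comp_absorb (U := uIcc c.1 w.1 ×ˢ uIcc c.2 w.2) hcC
      (isPreconnected_uIcc.prod isPreconnected_uIcc) ?_ ⟨left_mem_uIcc, left_mem_uIcc⟩
      ⟨right_mem_uIcc, right_mem_uIcc⟩
    rintro v ⟨v1, v2⟩
    refine ⟨hlb w hw (h1.trans_le (min_le_left _ _)) (h2.trans_le (min_le_left _ _)) v v1 v2, ?_⟩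
    have : v.2 ∈ Metric.ball c.2 ε := by
      rw [Metric.mem_ball, Real.dist_eq]
      exact (abs_sub_left_of_mem_uIcc v2).trans_lt (h2.trans_le (min_le_right _ _))
    exact hball this
  -- `c` is isolated in `F`
  have iso : ∀ w ∈ F, |w.1 - c.1| < min δ ε → |w.2 - c.2| < min δ ε → w = c := by
    intro w hw h1 h2
    have hw2 : w.2 = c.2 := hflat w (key w hw h1 h2)
    refine Prod.ext ?_ hw2
    by_contra hne
    apply hc.2
    refine ⟨0, by norm_num, Or.inl ⟨c.2, ⟨min c.1 w.1, max c.1 w.1, ?_, ?_⟩, by simp⟩⟩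
    · exact min_lt_max.2 (fun hh => hne hh.symm)
    · rintro ⟨v1, v2⟩ ⟨hv1, hv2⟩
      simp only [mem_singleton_iff] at hv2
      subst hv2
      have hv1' : v1 ∈ uIcc c.1 w.1 := hv1
      have hvd : |v1 - c.1| < min δ ε := (abs_sub_left_of_mem_uIcc hv1').trans_lt h1
      have hvF : (v1, c.2) ∈ F := hlb w hw (h1.trans_le (min_le_left _ _))
        (h2.trans_le (min_le_left _ _)) (v1, c.2) hv1' left_mem_uIcc
      rw [frontier_eq_closure_inter_closure]
      refine ⟨subset_closure hvF, ?_⟩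
      rw [Metric.mem_closure_iff]
      intro e he
      set η := min (e / 2) (min δ ε / 2) with hη
      have hη0 : 0 < η := lt_min (by linarith) (by linarith)
      have hηm : η < min δ ε := (min_le_right _ _).trans_lt (by linarith)
      have hηe : η < e := (min_le_left _ _).trans_lt (by linarith)
      refine ⟨(v1, c.2 + η), fun hmem => ?_, ?_⟩
      · have := hflat _ (key (v1, c.2 + η) hmem hvd (by
          simpa [abs_of_pos hη0] using hηm))
        simp only at this
        linarith
      · rw [Prod.dist_eq]
        simp only [dist_self, Real.dist_eq]
        rw [max_lt_iff]
        refine ⟨he, ?_⟩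
        rw [show c.2 - (c.2 + η) = -η by ring, abs_neg, abs_of_pos hη0]
        exact hηe
  have hO : IsOpen {w : ℝ × ℝ | |w.1 - c.1| < min δ ε ∧ |w.2 - c.2| < min δ ε} :=
    IsOpen.and (isOpen_lt (f := fun w : ℝ × ℝ => |w.1 - c.1|) (by fun_prop) continuous_const)
      (isOpen_lt (f := fun w : ℝ × ℝ => |w.2 - c.2|) (by fun_prop) continuous_const)
  obtain ⟨w, hwG, hw1, hw2⟩ := hG _ _ hO (isOpen_compl_singleton (x := c))
    (by
      intro w hw
      by_cases hwc : w = c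
      · left; subst hwc; simpa using hm
      · right; exact hwc)
    ⟨c, hcG, by simpa using hm⟩ ⟨p, hp, hpc⟩
  exact hw2 (iso w (hGF hwG) hw1.1 hw1.2)

end

/-- If `p, q` lie in the giant component `γ(R)` and both lie in `R↔⁺`, or
both lie in `R↔⁻`, then every shortest path in `F` from `p` to `q` is x-monotone. -/
theorem shortestPath_xMonotone_same_side
    (W : Set (ℝ × ℝ)) (hW : IsRectilinearEnv W)
    (F : Set (ℝ × ℝ)) (hF : F = freeSpace W)
    (sA sB tA tB : ℝ × ℝ)
    (P : Set (ℝ × ℝ)) (hP : P = {sA, sB, tA, tB})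
    (hsA : sA ∈ F) (hsB : sB ∈ F) (htA : tA ∈ F) (htB : tB ∈ F)
    (xlo xhi ylo yhi : ℝ) (R : Set (ℝ × ℝ))
    (hR : IsCorridor F P R) (hRrect : R = Icc xlo xhi ×ˢ Icc ylo yhi)
    (Rbox : Set (ℝ × ℝ))
    (hRbox : Rbox = Icc (xlo - 1) (xhi + 1) ×ˢ Icc (ylo - 1) (yhi + 1))
    (γR : Set (ℝ × ℝ)) (hγR : IsCompOf (F ∩ Rbox) γR) (hRsub : R ⊆ γR)
    (Rplus Rminus : Set (ℝ × ℝ))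
    (hRplus : Rplus = Icc (xlo - 1) (xhi + 1) ×ˢ Ioc yhi (yhi + 1))
    (hRminus : Rminus = Icc (xlo - 1) (xhi + 1) ×ˢ Ico (ylo - 1) ylo)
    (p q : ℝ × ℝ) (hpγ : p ∈ γR) (hqγ : q ∈ γR)
    (hside : (p ∈ Rplus ∧ q ∈ Rplus) ∨ (p ∈ Rminus ∧ q ∈ Rminus))
    (g : ℝ → ℝ × ℝ) (hg : IsShortestPathIn F p q g) :
    XMonotone g := by
  subst hF hRrect hRbox hRplus hRminus
  have hN : Nice (freeSpace W) := nice_free hW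
  have hPf : P.Finite := by rw [hP]; simp
  have hfin := heights_finite (P := P) (free_boxes hW).1.horiz_finite hPf
  obtain ⟨c, hc, hRc⟩ := hR
  obtain ⟨c0, _, rfl⟩ := hγR
  have hGs := connectedComponentIn_subset
    (freeSpace W ∩ Icc (xlo - 1) (xhi + 1) ×ˢ Icc (ylo - 1) (yhi + 1)) c0
  have hGp : IsPreconnected (connectedComponentIn
    (freeSpace W ∩ Icc (xlo - 1) (xhi + 1) ×ˢ Icc (ylo - 1) (yhi + 1)) c0) :=
    isPreconnected_connectedComponentIn
  set G := connectedComponentIn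
    (freeSpace W ∩ Icc (xlo - 1) (xhi + 1) ×ˢ Icc (ylo - 1) (yhi + 1)) c0 with hGdef
  have hcR : c ∈ Icc xlo xhi ×ˢ Icc ylo yhi := by
    rw [hRc]; exact subset_closure (mem_connectedComponentIn hc)
  have hcG : c ∈ G := hRsub hcR
  have hGF : G ⊆ freeSpace W := fun w hw => (hGs hw).1
  have hx : xlo ≤ xhi := hcR.1.1.trans hcR.1.2
  have hpc : p ≠ c := by
    rintro rfl
    rcases hside with ⟨h1, _⟩ | ⟨h1, _⟩
    · exact absurd hcR.2.2 (not_le.2 h1.2.1)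
    · exact absurd hcR.2.1 (not_le.2 h1.2.2)
  have hy : ylo < yhi := corridor_pos hN hfin hc hRc hGp hGF hcG hpγ hpc
  have hbR : ∀ x y, xhi < x → x ≤ xhi + 1 → ylo < y → y < yhi → (x, y) ∉ freeSpace W :=
    fun x y h1 h2 h3 h4 hm =>
      absurd (corridor_block hN hRc hx h3 h4 hm (by linarith) h2).2 (not_le.2 h1)
  have hbL : ∀ x y, x < xlo → xlo - 1 ≤ x → ylo < y → y < yhi → (x, y) ∉ freeSpace W :=
    fun x y h1 h2 h3 h4 hm =>
      absurd (corridor_block hN hRc hx h3 h4 hm h2 (by linarith)).1 (not_le.2 h1)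
  have hRF : ∀ x y, xlo ≤ x → x ≤ xhi → ylo ≤ y → y ≤ yhi → (x, y) ∈ freeSpace W :=
    fun x y h1 h2 h3 h4 => hGF (hRsub ⟨⟨h1, h2⟩, ⟨h3, h4⟩⟩)
  refine xmono_of_short hN hg ?_
  rcases hside with ⟨⟨_, hp1, hp2⟩, ⟨_, hq1, hq2⟩⟩ | ⟨⟨_, hp1, hp2⟩, ⟨_, hq1, hq2⟩⟩
  · have hD := sideUp hN hx hy (fun x h1 h2 => hRF x yhi h1 h2 hy.le le_rfl) hbR hbL hGp hGF
      (fun w hw => ⟨(hGs hw).2.1.1, (hGs hw).2.1.2, (hGs hw).2.2.2⟩) hcG hcR.1.1 hcR.1.2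
      hpγ hqγ hp1.le hq1.le
    refine hD.mono (ENNReal.ofReal_le_ofReal ?_)
    rcases abs_cases (p.2 - q.2) with ⟨h1, _⟩ | ⟨h1, _⟩ <;> rw [h1] <;> linarith
  · have hD := sideUp (G := (fun z : ℝ × ℝ => (z.1, -z.2)) '' G) hN.flipy
      (xlo := xlo) (xhi := xhi) (ylo := -yhi) (yhi := -ylo)
      (p := (p.1, -p.2)) (q := (q.1, -q.2)) (r := (c.1, -c.2)) hx (by linarith)
      (fun x h1 h2 => by simpa using hRF x ylo h1 h2 le_rfl hy.le)
      (fun x y h1 h2 h3 h4 => hbR x (-y) h1 h2 (by linarith) (by linarith))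
      (fun x y h1 h2 h3 h4 => hbL x (-y) h1 h2 (by linarith) (by linarith))
      (hGp.image _ (by fun_prop))
      (by rintro _ ⟨w, hw, rfl⟩; simpa using hGF hw)
      (by
        rintro _ ⟨w, hw, rfl⟩
        have := (hGs hw).2.2.1
        exact ⟨(hGs hw).2.1.1, (hGs hw).2.1.2, by simp only; linarith⟩)
      ⟨c, hcG, rfl⟩ hcR.1.1 hcR.1.2 ⟨p, hpγ, rfl⟩ ⟨q, hqγ, rfl⟩
      (by simp only; linarith) (by simp only; linarith)
    have hD' := hD.flipy
    simp only [neg_neg, Prod.mk.eta] at hD'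
    refine hD'.mono (ENNReal.ofReal_le_ofReal ?_)
    rcases abs_cases (p.2 - q.2) with ⟨h1, _⟩ | ⟨h1, _⟩ <;> rw [h1] <;> linarith

end
end

section
/- Let F ⊆ ℝ² be any set and let 𝐅 be the corresponding 4-dimensional free space. Let p = (p_A,p_B) ∈ 𝐅 and q = (q_A,q_B) ∈ 𝐅 be x-separated configurations with the same x-order, and suppose there is an x-monotone path φ_A in F from p_A to q_A and an x-monotone path φ_B in F from p_B to q_B. Then there exists a feasible plan φ : [0,1] → 𝐅 with φ(0) = p and φ(1) = q such that either on [0,1/2] the second robot stays at p_B while the first traverses φ_A and on [1/2,1] the first robot stays at q_A while the second traverses φ_B, or symmetrically with the roles of the two robots exchanged; moreover φ(λ) is x-separated for every λ ∈ [0,1]. The analogous statement holds with the x-direction replaced everywhere by the y-direction. -/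
open Set
open scoped ENNReal

noncomputable section

/-- Concatenation of two paths on `[0,1]`, each traversed at double speed. -/
theorem glue_paths {E : Type*} [TopologicalSpace E] (g h : ℝ → E) (P : E → Prop)
    (hg : ContinuousOn g (Icc 0 1)) (hh : ContinuousOn h (Icc 0 1)) (hgh : g 1 = h 0)
    (hPg : ∀ t ∈ Icc (0 : ℝ) 1, P (g t)) (hPh : ∀ t ∈ Icc (0 : ℝ) 1, P (h t)) :
    ∃ φ : ℝ → E, ContinuousOn φ (Icc 0 1) ∧ φ 0 = g 0 ∧ φ 1 = h 1 ∧
      (∀ lam ∈ Icc (0 : ℝ) 1, P (φ lam)) ∧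
      (∀ lam ∈ Icc (0 : ℝ) (1 / 2), φ lam = g (2 * lam)) ∧
      (∀ lam ∈ Icc (1 / 2 : ℝ) 1, φ lam = h (2 * lam - 1)) := by
  let φ : ℝ → E := fun t => if t ≤ 1 / 2 then g (2 * t) else h (2 * t - 1)
  have h1 : ∀ lam ∈ Icc (0 : ℝ) (1 / 2), φ lam = g (2 * lam) := by
    intro lam hl
    exact if_pos hl.2
  have h2 : ∀ lam ∈ Icc (1 / 2 : ℝ) 1, φ lam = h (2 * lam - 1) := by
    intro lam hl
    rcases eq_or_lt_of_le hl.1 with e | e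
    · subst e
      have : φ (1 / 2) = g (2 * (1 / 2)) := if_pos le_rfl
      rw [this]
      norm_num [hgh]
    · exact if_neg (not_le.mpr e)
  refine ⟨φ, ?_, ?_, ?_, ?_, h1, h2⟩
  · have hu : Icc (0 : ℝ) 1 = Icc 0 (1 / 2) ∪ Icc (1 / 2) 1 :=
      (Icc_union_Icc_eq_Icc (by norm_num) (by norm_num)).symm
    rw [hu]
    refine ContinuousOn.union_of_isClosed ?_ ?_ isClosed_Icc isClosed_Icc
    · refine ContinuousOn.congr (f := fun t => g (2 * t)) ?_ h1
      refine hg.comp (by fun_prop) ?_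
      intro t ht
      constructor <;> linarith [ht.1, ht.2]
    · refine ContinuousOn.congr (f := fun t => h (2 * t - 1)) ?_ h2
      refine hh.comp (by fun_prop) ?_
      intro t ht
      constructor <;> linarith [ht.1, ht.2]
  · rw [h1 0 (by norm_num)]; norm_num
  · rw [h2 1 (by norm_num)]; norm_num
  · intro t ht
    rcases le_total t (1 / 2) with e | e
    · rw [h1 t ⟨ht.1, e⟩]
      exact hPg _ ⟨by linarith [ht.1], by linarith⟩
    · rw [h2 t ⟨e, ht.2⟩]
      exact hPh _ ⟨by linarith, by linarith [ht.2]⟩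

/-- A monotone or antitone real function on `[0,1]` stays between its end values. -/
theorem mono_between (u : ℝ → ℝ) (a b : ℝ) (ha : u 0 = a) (hb : u 1 = b)
    (hu : MonotoneOn u (Icc 0 1) ∨ AntitoneOn u (Icc 0 1)) (t : ℝ) (ht : t ∈ Icc (0 : ℝ) 1) :
    (a ≤ u t ∧ u t ≤ b) ∨ (b ≤ u t ∧ u t ≤ a) := by
  subst ha hb
  have h0 : (0 : ℝ) ∈ Icc (0 : ℝ) 1 := by norm_num
  have h1 : (1 : ℝ) ∈ Icc (0 : ℝ) 1 := by norm_num
  rcases hu with h | h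
  · exact Or.inl ⟨h h0 ht ht.1, h ht h1 ht.2⟩
  · exact Or.inr ⟨h ht h1 ht.2, h h0 ht ht.1⟩

/-- Same sign and separation: one of the two robots is on the left in both configurations. -/
theorem order_cases (x y : ℝ) (hx : 1 ≤ |x|) (hy : 1 ≤ |y|) (h : Real.sign x = Real.sign y) :
    (1 ≤ x ∧ 1 ≤ y) ∨ (x ≤ -1 ∧ y ≤ -1) := by
  rcases le_abs.mp hx with a | a <;> rcases le_abs.mp hy with b | b
  · exact Or.inl ⟨a, b⟩
  · rw [Real.sign_of_pos (by linarith), Real.sign_of_neg (by linarith)] at h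
    norm_num at h
  · rw [Real.sign_of_neg (by linarith), Real.sign_of_pos (by linarith)] at h
    norm_num at h
  · exact Or.inr ⟨by linarith, by linarith⟩

/-- The result for an abstract coordinate function `f`. -/
theorem plan_of_coord (f : ℝ × ℝ → ℝ)
    (hf : ∀ a b : ℝ × ℝ, 1 ≤ |f a - f b| → 1 ≤ linf (a - b))
    (F : Set (ℝ × ℝ)) (p q : (ℝ × ℝ) × (ℝ × ℝ)) (hp : FreeConf F p) (hq : FreeConf F q)
    (φA φB : ℝ → ℝ × ℝ)
    (hps : 1 ≤ |f p.1 - f p.2|) (hqs : 1 ≤ |f q.1 - f q.2|)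
    (hs : Real.sign (f p.1 - f p.2) = Real.sign (f q.1 - f q.2))
    (hA : IsPathIn F p.1 q.1 φA)
    (mA : MonotoneOn (fun t => f (φA t)) (Icc 0 1) ∨ AntitoneOn (fun t => f (φA t)) (Icc 0 1))
    (hB : IsPathIn F p.2 q.2 φB)
    (mB : MonotoneOn (fun t => f (φB t)) (Icc 0 1) ∨ AntitoneOn (fun t => f (φB t)) (Icc 0 1)) :
    ∃ φ : ℝ → (ℝ × ℝ) × (ℝ × ℝ),
        ContinuousOn φ (Icc 0 1) ∧ φ 0 = p ∧ φ 1 = q ∧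
        (∀ lam ∈ Icc (0 : ℝ) 1, FreeConf F (φ lam)) ∧
        (∀ lam ∈ Icc (0 : ℝ) 1, 1 ≤ |f (φ lam).1 - f (φ lam).2|) ∧
        (((∀ lam ∈ Icc (0 : ℝ) (1 / 2), φ lam = (φA (2 * lam), p.2)) ∧
            (∀ lam ∈ Icc (1 / 2 : ℝ) 1, φ lam = (q.1, φB (2 * lam - 1)))) ∨
          ((∀ lam ∈ Icc (0 : ℝ) (1 / 2), φ lam = (p.1, φB (2 * lam))) ∧
            (∀ lam ∈ Icc (1 / 2 : ℝ) 1, φ lam = (φA (2 * lam - 1), q.2)))) := by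
  obtain ⟨cA, A0, A1, inA⟩ := hA
  obtain ⟨cB, B0, B1, inB⟩ := hB
  have bA := mono_between (fun t => f (φA t)) (f p.1) (f q.1) (by simp [A0]) (by simp [A1]) mA
  have bB := mono_between (fun t => f (φB t)) (f p.2) (f q.2) (by simp [B0]) (by simp [B1]) mB
  have ho := order_cases _ _ hps hqs hs
  have key : 
      ((∀ t ∈ Icc (0 : ℝ) 1, 1 ≤ |f (φA t) - f p.2|) ∧
        (∀ t ∈ Icc (0 : ℝ) 1, 1 ≤ |f q.1 - f (φB t)|)) ∨
      ((∀ t ∈ Icc (0 : ℝ) 1, 1 ≤ |f p.1 - f (φB t)|) ∧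
        (∀ t ∈ Icc (0 : ℝ) 1, 1 ≤ |f (φA t) - f q.2|)) := by
    simp only [le_abs]
    rcases ho with ⟨o1, o2⟩ | ⟨o1, o2⟩
    · by_cases hc : 1 ≤ f q.1 - f p.2
      · left
        constructor <;> intro t ht <;> left
        · rcases bA t ht with h | h <;> linarith [h.1, h.2]
        · rcases bB t ht with h | h <;> linarith [h.1, h.2]
      · right
        constructor <;> intro t ht <;> left
        · rcases bB t ht with h | h <;> linarith [h.1, h.2]
        · rcases bA t ht with h | h <;> linarith [h.1, h.2]
    · by_cases hc : f q.1 - f p.2 ≤ -1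
      · left
        constructor <;> intro t ht <;> right
        · rcases bA t ht with h | h <;> linarith [h.1, h.2]
        · rcases bB t ht with h | h <;> linarith [h.1, h.2]
      · right
        constructor <;> intro t ht <;> right
        · rcases bB t ht with h | h <;> linarith [h.1, h.2]
        · rcases bA t ht with h | h <;> linarith [h.1, h.2]
  rcases key with ⟨k1, k2⟩ | ⟨k1, k2⟩
  · obtain ⟨φ, c, e0, e1, hP, l, r⟩ := glue_paths (fun t => (φA t, p.2)) (fun t => (q.1, φB t))
      (fun c => FreeConf F c ∧ 1 ≤ |f c.1 - f c.2|)
      (cA.prodMk continuousOn_const) (continuousOn_const.prodMk cB) (by simp [A1, B0])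
      (fun t ht => ⟨⟨inA t ht, hp.2.1, hf _ _ (k1 t ht)⟩, k1 t ht⟩)
      (fun t ht => ⟨⟨hq.1, inB t ht, hf _ _ (k2 t ht)⟩, k2 t ht⟩)
    exact ⟨φ, c, by rw [e0, A0], by rw [e1, B1], fun t ht => (hP t ht).1,
      fun t ht => (hP t ht).2, Or.inl ⟨l, r⟩⟩
  · obtain ⟨φ, c, e0, e1, hP, l, r⟩ := glue_paths (fun t => (p.1, φB t)) (fun t => (φA t, q.2))
      (fun c => FreeConf F c ∧ 1 ≤ |f c.1 - f c.2|)
      (continuousOn_const.prodMk cB) (cA.prodMk continuousOn_const) (by simp [A0, B1])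
      (fun t ht => ⟨⟨hp.1, inB t ht, hf _ _ (k1 t ht)⟩, k1 t ht⟩)
      (fun t ht => ⟨⟨inA t ht, hq.2.1, hf _ _ (k2 t ht)⟩, k2 t ht⟩)
    exact ⟨φ, c, by rw [e0, B0], by rw [e1, A1], fun t ht => (hP t ht).1,
      fun t ht => (hP t ht).2, Or.inr ⟨l, r⟩⟩

/-- Given two x-separated free configurations with the same x-order and
x-monotone paths `φA`, `φB` in `F` for the two robots, there is a feasible plan moving one
robot along its path and then the other along its path (in one of the two orders) that is
x-separated throughout; and the analogous statement with the x-direction replaced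
everywhere by the y-direction. -/
theorem decoupled_monotone_plan_of_separated
    (F : Set (ℝ × ℝ)) (p q : (ℝ × ℝ) × (ℝ × ℝ))
    (hp : FreeConf F p) (hq : FreeConf F q) :
    (∀ φA φB : ℝ → ℝ × ℝ,
      XSep p → XSep q → SameXOrder p q →
      IsPathIn F p.1 q.1 φA → XMonotone φA →
      IsPathIn F p.2 q.2 φB → XMonotone φB →
      ∃ φ : ℝ → (ℝ × ℝ) × (ℝ × ℝ),
        ContinuousOn φ (Icc 0 1) ∧ φ 0 = p ∧ φ 1 = q ∧
        (∀ lam ∈ Icc (0 : ℝ) 1, FreeConf F (φ lam)) ∧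
        (∀ lam ∈ Icc (0 : ℝ) 1, XSep (φ lam)) ∧
        (((∀ lam ∈ Icc (0 : ℝ) (1 / 2), φ lam = (φA (2 * lam), p.2)) ∧
            (∀ lam ∈ Icc (1 / 2 : ℝ) 1, φ lam = (q.1, φB (2 * lam - 1)))) ∨
          ((∀ lam ∈ Icc (0 : ℝ) (1 / 2), φ lam = (p.1, φB (2 * lam))) ∧
            (∀ lam ∈ Icc (1 / 2 : ℝ) 1, φ lam = (φA (2 * lam - 1), q.2))))) ∧
    (∀ φA φB : ℝ → ℝ × ℝ,
      YSep p → YSep q → SameYOrder p q →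
      IsPathIn F p.1 q.1 φA → YMonotone φA →
      IsPathIn F p.2 q.2 φB → YMonotone φB →
      ∃ φ : ℝ → (ℝ × ℝ) × (ℝ × ℝ),
        ContinuousOn φ (Icc 0 1) ∧ φ 0 = p ∧ φ 1 = q ∧
        (∀ lam ∈ Icc (0 : ℝ) 1, FreeConf F (φ lam)) ∧
        (∀ lam ∈ Icc (0 : ℝ) 1, YSep (φ lam)) ∧
        (((∀ lam ∈ Icc (0 : ℝ) (1 / 2), φ lam = (φA (2 * lam), p.2)) ∧
            (∀ lam ∈ Icc (1 / 2 : ℝ) 1, φ lam = (q.1, φB (2 * lam - 1)))) ∨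
          ((∀ lam ∈ Icc (0 : ℝ) (1 / 2), φ lam = (p.1, φB (2 * lam))) ∧
            (∀ lam ∈ Icc (1 / 2 : ℝ) 1, φ lam = (φA (2 * lam - 1), q.2))))) := by
  refine ⟨fun φA φB h1 h2 h3 h4 h5 h6 h7 => ?_, fun φA φB h1 h2 h3 h4 h5 h6 h7 => ?_⟩
  · exact plan_of_coord Prod.fst (fun a b h => le_trans h (le_max_left _ _)) F p q hp hq φA φB
      h1 h2 h3 h4 h5 h6 h7
  · exact plan_of_coord Prod.snd (fun a b h => le_trans h (le_max_right _ _)) F p q hp hq φA φB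
      h1 h2 h3 h4 h5 h6 h7

end
end

section
/- Let γ : [ν₁,ν₂] → ℝ² be a continuous path of finite ℓ₁-length and let y* ∈ ℝ. Define γ* : [ν₁,ν₂] → ℝ² by γ*(ν) := (γ(ν)₁, y*). If there exists ν ∈ [ν₁,ν₂] with γ(ν)₂ = y*, then the ℓ₁-length of γ* plus the total length |γ(ν₁)₂ − y*| + |γ(ν₂)₂ − y*| of the two vertical ghost segments is at most the ℓ₁-length of γ. -/
open Set
open scoped ENNReal

noncomputable section

theorem push_edist_aux (p q : ℝ × ℝ) :
    edist ((WithLp.equiv 1 (ℝ × ℝ)).symm p) ((WithLp.equiv 1 (ℝ × ℝ)).symm q)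
      = edist p.1 q.1 + edist p.2 q.2 := by
  rw [WithLp.prod_edist_eq_add (by norm_num)]
  simp

theorem push_half_aux (γ : ℝ → ℝ × ℝ) (y a b : ℝ) (hab : a ≤ b) :
    l1VarOn (fun t => ((γ t).1, y)) (Icc a b) + edist (γ a).2 (γ b).2
      ≤ l1VarOn γ (Icc a b) := by
  unfold l1VarOn
  set f : ℝ → WithLp 1 (ℝ × ℝ) := fun t => (WithLp.equiv 1 (ℝ × ℝ)).symm (γ t) with hf
  have hfe : ∀ s t, edist (f s) (f t) = edist (γ s).1 (γ t).1 + edist (γ s).2 (γ t).2 :=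
    fun s t => push_edist_aux _ _
  have : Nonempty {u : ℕ → ℝ // Monotone u ∧ ∀ i, u i ∈ Icc a b} :=
    eVariationOn.nonempty_monotone_mem ⟨a, left_mem_Icc.2 hab⟩
  conv_lhs => rw [eVariationOn]
  rw [ENNReal.iSup_add]
  refine iSup_le ?_
  rintro ⟨n, u, hu, hus⟩
  simp only [push_edist_aux, edist_self, add_zero]
  have h0 := hus 0
  have hn := hus n
  have h0n : u 0 ≤ u n := hu (Nat.zero_le n)
  have e1 := eVariationOn.Icc_add_Icc f (s := univ) h0.1 h0.2 (mem_univ _)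
  have e2 := eVariationOn.Icc_add_Icc f (s := univ) h0n hn.2 (mem_univ _)
  simp only [univ_inter] at e1 e2
  rw [← e1, ← e2]
  have b1 : edist (γ a).2 (γ (u 0)).2 ≤ eVariationOn f (Icc a (u 0)) := by
    refine le_trans ?_ (eVariationOn.edist_le f (left_mem_Icc.2 h0.1) (right_mem_Icc.2 h0.1))
    rw [hfe]; exact le_add_self
  have b3 : edist (γ (u n)).2 (γ b).2 ≤ eVariationOn f (Icc (u n) b) := by
    refine le_trans ?_ (eVariationOn.edist_le f (left_mem_Icc.2 hn.2) (right_mem_Icc.2 hn.2))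
    rw [hfe]; exact le_add_self
  have b2 : ∑ i ∈ Finset.range n, edist (γ (u (i + 1))).1 (γ (u i)).1
      + edist (γ (u 0)).2 (γ (u n)).2 ≤ eVariationOn f (Icc (u 0) (u n)) := by
    have hs := eVariationOn.sum_le_of_monotoneOn_Iic (f := f) (s := Icc (u 0) (u n)) (n := n)
      (u := u) (hu.monotoneOn _) (fun i hi => ⟨hu (Nat.zero_le i), hu hi⟩)
    refine le_trans ?_ hs
    simp only [hfe, Finset.sum_add_distrib]
    gcongr
    refine (edist_le_range_sum_edist (fun i => (γ (u i)).2) n).trans (le_of_eq ?_)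
    exact Finset.sum_congr rfl fun i _ => edist_comm _ _
  have ht : edist (γ a).2 (γ b).2 ≤ edist (γ a).2 (γ (u 0)).2 +
      edist (γ (u 0)).2 (γ (u n)).2 + edist (γ (u n)).2 (γ b).2 := edist_triangle4 _ _ _ _
  calc _ ≤ ∑ i ∈ Finset.range n, edist (γ (u (i + 1))).1 (γ (u i)).1 +
        (edist (γ a).2 (γ (u 0)).2 +
      edist (γ (u 0)).2 (γ (u n)).2 + edist (γ (u n)).2 (γ b).2) := by gcongr
    _ = edist (γ a).2 (γ (u 0)).2 + ((∑ i ∈ Finset.range n, edist (γ (u (i + 1))).1 (γ (u i)).1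
      + edist (γ (u 0)).2 (γ (u n)).2) + edist (γ (u n)).2 (γ b).2) := by ring
    _ ≤ _ := by gcongr

/-- Pushing a path of finite ℓ₁-length onto a horizontal line through a
height it attains does not increase its ℓ₁-length, even after accounting for the two
vertical ghost segments. -/
theorem push_length_le
    (ν₁ ν₂ : ℝ) (hle : ν₁ ≤ ν₂) (γ : ℝ → ℝ × ℝ)
    (hcont : ContinuousOn γ (Icc ν₁ ν₂))
    (hfin : l1VarOn γ (Icc ν₁ ν₂) ≠ ⊤)
    (ystar : ℝ) (hhit : ∃ ν ∈ Icc ν₁ ν₂, (γ ν).2 = ystar) :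
    l1VarOn (fun t => ((γ t).1, ystar)) (Icc ν₁ ν₂) +
        ENNReal.ofReal (|(γ ν₁).2 - ystar| + |(γ ν₂).2 - ystar|) ≤
      l1VarOn γ (Icc ν₁ ν₂) := by
  obtain ⟨c, hc, hy⟩ := hhit
  have h1 := push_half_aux γ ystar ν₁ c hc.1
  have h2 := push_half_aux γ ystar c ν₂ hc.2
  have spl : ∀ g : ℝ → ℝ × ℝ, l1VarOn g (Icc ν₁ c) + l1VarOn g (Icc c ν₂)
      = l1VarOn g (Icc ν₁ ν₂) := by
    intro g
    have := eVariationOn.Icc_add_Icc (fun t => (WithLp.equiv 1 (ℝ × ℝ)).symm (g t))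
      (s := univ) hc.1 hc.2 (mem_univ _)
    simpa only [univ_inter, l1VarOn] using this
  rw [← spl, ← spl, ENNReal.ofReal_add (abs_nonneg _) (abs_nonneg _)]
  rw [hy, edist_dist, Real.dist_eq] at h1 h2
  rw [abs_sub_comm] at h2
  refine le_trans (le_of_eq ?_) (add_le_add h1 h2)
  ring

end
end

section
/- Let W be a rectilinear polygonal environment with free space F, fix points s_A,s_B,t_A,t_B ∈ F, let R be a corridor, and let I(R), γ(R), and the corner squares of R_□ be as in the context. Then every connected component of I(R) other than the giant component γ(R) is contained in one of the four corner squares of R_□, and the intersection of every such component with every horizontal line and with every vertical line is connected (each such component is xy-monotone). -/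
open Set
open scoped ENNReal

noncomputable section

lemma clamp_dist (l h x : ℝ) (hlh : l ≤ h) (h1 : l - 1 ≤ x) (h2 : x ≤ h + 1) :
    |max l (min h x) - x| ≤ 1 := by
  rw [abs_le]
  rcases le_total h x with a | a
  · rw [min_eq_left a, max_eq_right hlh]; constructor <;> linarith
  · rw [min_eq_right a]
    rcases le_total l x with b | b
    · rw [max_eq_right b]; constructor <;> linarith
    · rw [max_eq_left b]; constructor <;> linarith

lemma seg_vert (W : Set (ℝ × ℝ)) (a b : ℝ × ℝ) (ha : a ∈ freeSpace W) (hb : b ∈ freeSpace W)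
    (h1 : a.1 = b.1) (h2 : |a.2 - b.2| ≤ 1) : segment ℝ a b ⊆ freeSpace W := by
  rintro z ⟨s, t, hs, ht, hst, rfl⟩ q hq
  obtain ⟨a1, a2⟩ := a
  obtain ⟨b1, b2⟩ := b
  obtain ⟨q1, q2⟩ := q
  simp only at h1 h2
  subst h1
  obtain rfl : s = 1 - t := by linarith
  simp only [linf, max_le_iff] at hq
  obtain ⟨hq1, hq2⟩ := hq
  rw [abs_le] at hq2 h2
  have e : (1 - t) • (a1, a2) + t • (a1, b2) + (q1, q2)
      = (a1 + q1, a2 + t * (b2 - a2) + q2) := by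
    ext <;> simp <;> ring
  rw [e]
  have key : |t * (b2 - a2) + q2| ≤ 1 / 2 ∨ |a2 + t * (b2 - a2) + q2 - b2| ≤ 1 / 2 := by
    rw [abs_le, abs_le]
    rcases le_total a2 b2 with h | h
    · have l1 : 0 ≤ t * (b2 - a2) := mul_nonneg ht (by linarith)
      have l2 : 0 ≤ (1 - t) * (b2 - a2) := mul_nonneg hs (by linarith)
      rcases le_total (t * (b2 - a2) + q2) (1 / 2) with h' | h'
      · left; constructor <;> linarith
      · right; constructor <;> linarith
    · have l1 : 0 ≤ t * (a2 - b2) := mul_nonneg ht (by linarith)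
      have l2 : 0 ≤ (1 - t) * (a2 - b2) := mul_nonneg hs (by linarith)
      rcases le_total (-(1 / 2)) (t * (b2 - a2) + q2) with h' | h'
      · left; constructor <;> linarith
      · right; constructor <;> linarith
  rcases key with h | h
  · have := ha (q1, t * (b2 - a2) + q2) (max_le hq1 h)
    convert this using 1
    ext <;> simp <;> ring
  · have := hb (q1, a2 + t * (b2 - a2) + q2 - b2) (max_le hq1 h)
    convert this using 1
    ext <;> simp

lemma seg_horiz (W : Set (ℝ × ℝ)) (a b : ℝ × ℝ) (ha : a ∈ freeSpace W) (hb : b ∈ freeSpace W)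
    (h1 : a.2 = b.2) (h2 : |a.1 - b.1| ≤ 1) : segment ℝ a b ⊆ freeSpace W := by
  have sw : ∀ p ∈ freeSpace W, p.swap ∈ freeSpace (Prod.swap ⁻¹' W) := by
    intro p hp q hq
    have := hp q.swap (by simpa [linf, max_comm] using hq)
    simpa using this
  rintro z ⟨s, t, hs, ht, hst, rfl⟩ q hq
  have := seg_vert (Prod.swap ⁻¹' W) a.swap b.swap (sw a ha) (sw b hb) h1 h2
    ⟨s, t, hs, ht, hst, rfl⟩ q.swap (by simpa [linf, max_comm] using hq)
  simpa using this

/-- Every connected component of the influence region `I(R)` other than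
the giant component is contained in one of the four corner squares of `R_□`, and its
intersection with every horizontal line and with every vertical line is connected. -/
theorem tiny_components_in_corners_xyMonotone
    (W : Set (ℝ × ℝ)) (hW : IsRectilinearEnv W)
    (F : Set (ℝ × ℝ)) (hF : F = freeSpace W)
    (sA sB tA tB : ℝ × ℝ)
    (P : Set (ℝ × ℝ)) (hP : P = {sA, sB, tA, tB})
    (hsA : sA ∈ F) (hsB : sB ∈ F) (htA : tA ∈ F) (htB : tB ∈ F)
    (xlo xhi ylo yhi : ℝ) (R : Set (ℝ × ℝ))
    (hR : IsCorridor F P R) (hRrect : R = Icc xlo xhi ×ˢ Icc ylo yhi)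
    (Rbox : Set (ℝ × ℝ))
    (hRbox : Rbox = Icc (xlo - 1) (xhi + 1) ×ˢ Icc (ylo - 1) (yhi + 1))
    (γR : Set (ℝ × ℝ)) (hγR : IsCompOf (F ∩ Rbox) γR) (hRsub : R ⊆ γR)
    (C : Set (ℝ × ℝ)) (hC : IsCompOf (F ∩ Rbox) C) (hCne : C ≠ γR) :
    (C ⊆ Ico (xlo - 1) xlo ×ˢ Ico (ylo - 1) ylo ∨
      C ⊆ Ico (xlo - 1) xlo ×ˢ Ioc yhi (yhi + 1) ∨
      C ⊆ Ioc xhi (xhi + 1) ×ˢ Ico (ylo - 1) ylo ∨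
      C ⊆ Ioc xhi (xhi + 1) ×ˢ Ioc yhi (yhi + 1)) ∧
    (∀ y : ℝ, IsPreconnected (C ∩ {p : ℝ × ℝ | p.2 = y})) ∧
    (∀ x : ℝ, IsPreconnected (C ∩ {p : ℝ × ℝ | p.1 = x})) := by
  obtain ⟨c, hc, rfl⟩ := hC
  obtain ⟨g, hg, rfl⟩ := hγR
  subst hF
  have hRne : R.Nonempty := by
    obtain ⟨c', hc', rfl⟩ := hR
    exact ⟨c', subset_closure (mem_connectedComponentIn hc')⟩
  have hconv : Convex ℝ Rbox := by
    rw [hRbox]; exact (convex_Icc _ _).prod (convex_Icc _ _)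
  rw [hRrect] at hRne hRsub
  obtain ⟨r, ⟨hr1, hr1'⟩, hr2, hr2'⟩ := hRne
  have hx : xlo ≤ xhi := hr1.trans hr1'
  have hy : ylo ≤ yhi := hr2.trans hr2'
  set G := freeSpace W ∩ Rbox with hG
  have segG : ∀ a ∈ G, ∀ b ∈ G, ((a.1 = b.1 ∧ |a.2 - b.2| ≤ 1) ∨ (a.2 = b.2 ∧ |a.1 - b.1| ≤ 1)) →
      segment ℝ a b ⊆ G := by
    intro a ha b hb h
    refine subset_inter ?_ (hconv.segment_subset ha.2 hb.2)
    rcases h with h | h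
    · exact seg_vert W a b ha.1 hb.1 h.1 h.2
    · exact seg_horiz W a b ha.1 hb.1 h.1 h.2
  have segC : ∀ d a, a ∈ connectedComponentIn G d → ∀ b ∈ G,
      ((a.1 = b.1 ∧ |a.2 - b.2| ≤ 1) ∨ (a.2 = b.2 ∧ |a.1 - b.1| ≤ 1)) →
      segment ℝ a b ⊆ connectedComponentIn G d := by
    intro d a ha b hb h
    rw [connectedComponentIn_eq ha]
    exact (convex_segment a b).isPreconnected.subset_connectedComponentIn
      (left_mem_segment ℝ a b) (segG a (connectedComponentIn_subset _ _ ha) b hb h)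
  have notγ : ∀ p ∈ connectedComponentIn G c, p ∉ connectedComponentIn G g := by
    intro p hp hp'
    exact hCne ((connectedComponentIn_eq hp).trans (connectedComponentIn_eq hp').symm)
  have box : ∀ p ∈ connectedComponentIn G c,
      (xlo - 1 ≤ p.1 ∧ p.1 ≤ xhi + 1) ∧ (ylo - 1 ≤ p.2 ∧ p.2 ≤ yhi + 1) := by
    intro p hp
    have := (connectedComponentIn_subset _ _ hp).2
    rw [hRbox] at this
    exact this
  have offx : ∀ p ∈ connectedComponentIn G c, p.1 < xlo ∨ xhi < p.1 := by
    intro p hp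
    by_contra! h
    obtain ⟨-, h3, h4⟩ := box p hp
    have hm : (p.1, max ylo (min yhi p.2)) ∈ connectedComponentIn G g :=
      hRsub ⟨h, le_max_left _ _, max_le hy (min_le_left _ _)⟩
    refine notγ p hp (segC g _ hm p (connectedComponentIn_subset _ _ hp) (Or.inl ⟨rfl, ?_⟩)
      (right_mem_segment ℝ _ _))
    exact clamp_dist _ _ _ hy h3 h4
  have offy : ∀ p ∈ connectedComponentIn G c, p.2 < ylo ∨ yhi < p.2 := by
    intro p hp
    by_contra! h
    obtain ⟨⟨h3, h4⟩, -⟩ := box p hp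
    have hm : (max xlo (min xhi p.1), p.2) ∈ connectedComponentIn G g :=
      hRsub ⟨⟨le_max_left _ _, max_le hx (min_le_left _ _)⟩, h⟩
    refine notγ p hp (segC g _ hm p (connectedComponentIn_subset _ _ hp) (Or.inr ⟨rfl, ?_⟩)
      (right_mem_segment ℝ _ _))
    exact clamp_dist _ _ _ hx h3 h4
  have hpre : IsPreconnected (connectedComponentIn G c) := isPreconnected_connectedComponentIn
  have sx : connectedComponentIn G c ⊆ {p | p.1 < xlo} ∨
      connectedComponentIn G c ⊆ {p | xhi < p.1} := by
    refine IsPreconnected.subset_or_subset (isOpen_lt continuous_fst continuous_const)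
      (isOpen_lt continuous_const continuous_fst) ?_ offx hpre
    rw [Set.disjoint_left]
    intro p h1 h2
    simp only [mem_setOf_eq] at h1 h2
    linarith
  have sy : connectedComponentIn G c ⊆ {p | p.2 < ylo} ∨
      connectedComponentIn G c ⊆ {p | yhi < p.2} := by
    refine IsPreconnected.subset_or_subset (isOpen_lt continuous_snd continuous_const)
      (isOpen_lt continuous_const continuous_snd) ?_ offy hpre
    rw [Set.disjoint_left]
    intro p h1 h2
    simp only [mem_setOf_eq] at h1 h2
    linarith
  have dx : ∀ a ∈ connectedComponentIn G c, ∀ b ∈ connectedComponentIn G c,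
      |a.1 - b.1| ≤ 1 := by
    intro a ha b hb
    have h1 := box a ha
    have h2 := box b hb
    rw [abs_le]
    rcases sx with h | h <;>
    · have h3 := h ha
      have h4 := h hb
      simp only [mem_setOf_eq] at h3 h4
      constructor <;> linarith
  have dy : ∀ a ∈ connectedComponentIn G c, ∀ b ∈ connectedComponentIn G c,
      |a.2 - b.2| ≤ 1 := by
    intro a ha b hb
    have h1 := box a ha
    have h2 := box b hb
    rw [abs_le]
    rcases sy with h | h <;>
    · have h3 := h ha
      have h4 := h hb
      simp only [mem_setOf_eq] at h3 h4
      constructor <;> linarith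
  refine ⟨?_, ?_, ?_⟩
  · rcases sx with h | h <;> rcases sy with h' | h'
    · exact Or.inl fun p hp => ⟨⟨(box p hp).1.1, h hp⟩, (box p hp).2.1, h' hp⟩
    · exact Or.inr (Or.inl fun p hp => ⟨⟨(box p hp).1.1, h hp⟩, h' hp, (box p hp).2.2⟩)
    · exact Or.inr (Or.inr (Or.inl fun p hp => ⟨⟨h hp, (box p hp).1.2⟩, (box p hp).2.1, h' hp⟩))
    · exact Or.inr (Or.inr (Or.inr fun p hp => ⟨⟨h hp, (box p hp).1.2⟩, h' hp, (box p hp).2.2⟩))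
  · intro y
    refine Convex.isPreconnected (convex_iff_segment_subset.2 ?_)
    rintro a ⟨ha, ha'⟩ b ⟨hb, hb'⟩
    simp only [mem_setOf_eq] at ha' hb'
    refine subset_inter (segC c a ha b (connectedComponentIn_subset _ _ hb)
      (Or.inr ⟨ha'.trans hb'.symm, dx a ha b hb⟩)) ?_
    rintro z ⟨s, t, hs, ht, hst, rfl⟩
    simp [ha', hb', ← add_mul, hst]
  · intro x
    refine Convex.isPreconnected (convex_iff_segment_subset.2 ?_)
    rintro a ⟨ha, ha'⟩ b ⟨hb, hb'⟩
    simp only [mem_setOf_eq] at ha' hb'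
    refine subset_inter (segC c a ha b (connectedComponentIn_subset _ _ hb)
      (Or.inl ⟨ha'.trans hb'.symm, dy a ha b hb⟩)) ?_
    rintro z ⟨s, t, hs, ht, hst, rfl⟩
    simp [ha', hb', ← add_mul, hst]

end
end
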